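/- arXiv:1510.08118 — 8 statements merged into one kernel-verified Lean document; each statement's English description precedes it below -/
import Mathlib

section
/- Let α, β > 0 be real numbers, let l, m ≥ 1 be natural numbers, and let A, B : ℝ → ℕ be weighted sets whose supports are closed, discrete subsets of ℝ that are bounded below. If for every x ∈ ℝ one has l·A(x/α) + m·A(x/β) = l·B(x/α) + m·B(x/β), then A = B. -/
/-!
Let `D` be the set where `A` and `B` differ. By cancellation, `α⁻¹ • x` lies in `D` exactly when
`β⁻¹ • x` does, so if `‖α‖ < ‖β‖`, as we may assume when the norms differ, then `D` is stable under
multiplication by `q = β⁻¹ * α`, where `‖q‖ < 1`. A nonzero point `x` of `D` would thus give points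
`q ^ n • x` of `D` accumulating at `0`, which is impossible because the supports of `A` and `B` do
not accumulate there. At `x = 0`, or when `α = β`, the two terms on each side merge into one
multiple by `l + m`, which can be cancelled.
-/

open Filter Function Set Topology

section Cancellation

variable {M : Type*} [AddCancelCommMonoid M] [IsAddTorsionFree M] {l m : ℕ} {a a' b b' : M}

theorem eq_iff_eq_of_nsmul_add_nsmul_eq (hl : l ≠ 0) (hm : m ≠ 0)
    (h : l • a + m • b = l • a' + m • b') : a = a' ↔ b = b' := by
  constructor
  · rintro rfl
    exact nsmul_right_injective hm (add_left_cancel h)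
  · rintro rfl
    exact nsmul_right_injective hl (add_right_cancel h)

theorem eq_of_nsmul_add_nsmul_self_eq (hl : l ≠ 0) (h : l • a + m • a = l • a' + m • a') :
    a = a' := by
  rw [← add_nsmul, ← add_nsmul] at h
  exact nsmul_right_injective (by lia) h

end Cancellation

section DerivedSet

variable {X : Type*} [TopologicalSpace X] {x : X}

theorem not_accPt_of_isClosed_of_isDiscrete {S : Set X} (hc : IsClosed S) (hd : IsDiscrete S) :
    ¬AccPt x (𝓟 S) := by
  rw [AccPt, not_neBot, ← disjoint_iff]
  exact isClosed_and_discrete_iff.1 ⟨hc, hd⟩ x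

theorem not_accPt_setOf_ne_of_support {M : Type*} [Zero M] {A B : X → M}
    (hA : ¬AccPt x (𝓟 (support A))) (hB : ¬AccPt x (𝓟 (support B))) :
    ¬AccPt x (𝓟 {y | A y ≠ B y}) := by
  have subset_union : {y | A y ≠ B y} ⊆ support A ∪ support B := fun y hy ↦
    or_iff_not_imp_left.2 fun hAy hBy ↦ hy ((notMem_support.1 hAy).trans hBy.symm)
  have not_accPt_union : ¬AccPt x (𝓟 (support A ∪ support B)) := by
    rw [← sup_principal, accPt_sup]
    exact not_or.2 ⟨hA, hB⟩
  exact fun hD ↦ not_accPt_union (hD.mono (principal_mono.2 subset_union))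

end DerivedSet

section ScalingInvariance

variable {𝕜 E : Type*} [NormedDivisionRing 𝕜] [AddCommGroup E] [Module 𝕜 E]
  [TopologicalSpace E] [ContinuousSMul 𝕜 E] {S : Set E} {x : E}

theorem accPt_zero_of_mapsTo_smul {q : 𝕜} (hq₀ : q ≠ 0) (hq₁ : ‖q‖ < 1)
    (hS : MapsTo (q • ·) S S) (hxS : x ∈ S) (hx : x ≠ 0) : AccPt 0 (𝓟 S) := by
  have tendsto_zero : Tendsto (fun n : ℕ ↦ q ^ n • x) atTop (𝓝 0) := by
    simpa only [zero_smul] using (tendsto_pow_atTop_nhds_zero_of_norm_lt_one hq₁).smul_const x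
  have pow_smul_mem (n : ℕ) : q ^ n • x ∈ S := by
    simpa only [smul_iterate] using hS.iterate n hxS
  exact accPt_iff_frequently.2 <| tendsto_zero.frequently <| Frequently.of_forall fun n ↦
    ⟨smul_ne_zero (pow_ne_zero n hq₀) hx, pow_smul_mem n⟩

theorem accPt_zero_of_inv_smul_mem_iff {α β : 𝕜} (hα : α ≠ 0) (hβ : β ≠ 0) (hαβ : ‖α‖ ≠ ‖β‖)
    (hS : ∀ y : E, α⁻¹ • y ∈ S ↔ β⁻¹ • y ∈ S) (hxS : x ∈ S) (hx : x ≠ 0) : AccPt 0 (𝓟 S) := by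
  wlog hlt : ‖α‖ < ‖β‖ generalizing α β
  · exact this hβ hα hαβ.symm (fun y ↦ (hS y).symm) (hαβ.lt_or_gt.resolve_left hlt)
  have norm_lt_one : ‖β⁻¹ * α‖ < 1 := by
    rwa [norm_mul, norm_inv, inv_mul_lt_one₀ (norm_pos_iff.2 hβ)]
  refine accPt_zero_of_mapsTo_smul (mul_ne_zero (inv_ne_zero hβ) hα) norm_lt_one ?_ hxS hx
  intro y hy
  simpa only [mul_smul] using (hS (α • y)).1 (by rwa [inv_smul_smul₀ hα])

end ScalingInvariance

theorem stmt_0_general {𝕜 E M : Type*} [NormedDivisionRing 𝕜] [AddCommGroup E] [Module 𝕜 E]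
    [TopologicalSpace E] [ContinuousSMul 𝕜 E] [AddCancelCommMonoid M] [IsAddTorsionFree M]
    {α β : 𝕜} (hα : α ≠ 0) (hβ : β ≠ 0) (hαβ : α = β ∨ ‖α‖ ≠ ‖β‖)
    {l m : ℕ} (hl : l ≠ 0) (hm : m ≠ 0) {A B : E → M}
    (hA : ¬AccPt 0 (𝓟 (support A))) (hB : ¬AccPt 0 (𝓟 (support B)))
    (h : ∀ x : E, l • A (α⁻¹ • x) + m • A (β⁻¹ • x) = l • B (α⁻¹ • x) + m • B (β⁻¹ • x)) :
    A = B := by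
  funext x
  rcases hαβ with rfl | hαβ
  · exact eq_of_nsmul_add_nsmul_self_eq hl (by simpa only [inv_smul_smul₀ hα] using h (α • x))
  by_contra hne
  have ne_zero : x ≠ 0 := by
    rintro rfl
    exact hne (eq_of_nsmul_add_nsmul_self_eq hl (by simpa only [smul_zero] using h 0))
  have ne_iff_ne (y : E) : A (α⁻¹ • y) ≠ B (α⁻¹ • y) ↔ A (β⁻¹ • y) ≠ B (β⁻¹ • y) :=
    (eq_iff_eq_of_nsmul_add_nsmul_eq hl hm (h y)).not
  exact not_accPt_setOf_ne_of_support hA hB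
    (accPt_zero_of_inv_smul_mem_iff hα hβ hαβ ne_iff_ne hne ne_zero)

/-- Lemma 3.14: a weighted set `A` (discrete, bounded below) can be reconstructed from
the weighted union of `l` copies of `αA` and `m` copies of `βA`. -/
theorem stmt_0 (α β : ℝ) (hα : 0 < α) (hβ : 0 < β) (l m : ℕ) (hl : 1 ≤ l) (hm : 1 ≤ m)
    (A B : ℝ → ℕ)
    (hAclosed : IsClosed {x : ℝ | A x ≠ 0}) (hAdisc : DiscreteTopology {x : ℝ | A x ≠ 0})
    (hAbdd : BddBelow {x : ℝ | A x ≠ 0})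
    (hBclosed : IsClosed {x : ℝ | B x ≠ 0}) (hBdisc : DiscreteTopology {x : ℝ | B x ≠ 0})
    (hBbdd : BddBelow {x : ℝ | B x ≠ 0})
    (h : ∀ x : ℝ, l * A (x / α) + m * A (x / β) = l * B (x / α) + m * B (x / β)) :
    A = B := by
  have hαβ : α = β ∨ ‖α‖ ≠ ‖β‖ := by
    simpa only [Real.norm_of_nonneg hα.le, Real.norm_of_nonneg hβ.le] using eq_or_ne α β
  exact stmt_0_general hα.ne' hβ.ne' hαβ (Nat.pos_iff_ne_zero.1 hl) (Nat.pos_iff_ne_zero.1 hm)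
    (not_accPt_of_isClosed_of_isDiscrete hAclosed ⟨hAdisc⟩)
    (not_accPt_of_isClosed_of_isDiscrete hBclosed ⟨hBdisc⟩)
    (by simpa only [smul_eq_mul, ← div_eq_inv_mul] using h)
end

section
/- Let n, p be natural numbers with 1 ≤ p ≤ n. For all natural numbers k, l one has (k+p)·(k+n−p−1) = (l+p)·(l+n−p+1) (as integers, allowing k+n−p−1 to be negative when p = n and k = 0) if and only if k = l + 1 and n = 2p. -/
/-!
At `k = l + 1` the two eigenvalues differ by exactly `n - 2 * p`. Away from it there is no
coincidence: for `k ≤ l` the factors satisfy `k + p ≤ l + p` and `k + n - p - 1 < l + n - p + 1`,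
while for `k ≥ l + 2` they satisfy `l + p < k + p` and `l + n - p + 1 ≤ k + n - p - 1`, and
positivity of the factors makes the products strictly ordered.
-/

/-- The number `λ_p^k`, for `k ≥ 1` an eigenvalue of `δd` on coclosed `p`-forms on the unit
`n`-sphere. The dimension and the degree are taken in a ring, so that the subtractions do not
truncate. -/
def coclosedEigenvalue {R : Type*} [Ring R] (n p : R) (k : ℕ) : R :=
  (k + p) * (k + n - p - 1)

/-- The number `μ_p^l`, for `l ≥ 0` an eigenvalue of `dδ` on closed `p`-forms (`p ≥ 1`) on the unit
`n`-sphere, with `n` and `p` in a ring as in `coclosedEigenvalue`. -/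
def closedEigenvalue {R : Type*} [Ring R] (n p : R) (l : ℕ) : R :=
  (l + p) * (l + n - p + 1)

theorem coclosedEigenvalue_succ {R : Type*} [CommRing R] (n p : R) (l : ℕ) :
    coclosedEigenvalue n p (l + 1) = closedEigenvalue n p l + (n - 2 * p) := by
  simp only [coclosedEigenvalue, closedEigenvalue, Nat.cast_add_one]
  ring

section Ordered

variable {R : Type*} [CommRing R] [LinearOrder R] [IsStrictOrderedRing R] {n p : R} {k l : ℕ}

theorem coclosedEigenvalue_lt_closedEigenvalue (hp : 0 < p) (hpn : p ≤ n + 1) (hkl : k ≤ l) :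
    coclosedEigenvalue n p k < closedEigenvalue n p l := by
  have hkl' : (k : R) ≤ l := Nat.cast_le.mpr hkl
  have hleft : (k : R) + p ≤ l + p := by linarith
  have hright : (k : R) + n - p - 1 < l + n - p + 1 := by linarith
  have hleft_pos : 0 < (k : R) + p := by positivity
  have hright_nonneg : 0 ≤ (l : R) + n - p + 1 := by linarith [l.cast_nonneg (α := R)]
  exact mul_lt_mul_of_le_of_lt_of_pos_of_nonneg hleft hright hleft_pos hright_nonneg

theorem closedEigenvalue_lt_coclosedEigenvalue (hp : 0 ≤ p) (hpn : p < n + 1) (hlk : l + 2 ≤ k) :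
    closedEigenvalue n p l < coclosedEigenvalue n p k := by
  have hlk' : (l : R) + 2 ≤ k := by exact_mod_cast hlk
  have hleft : (l : R) + p < k + p := by linarith
  have hright : (l : R) + n - p + 1 ≤ k + n - p - 1 := by linarith
  have hright_pos : 0 < (l : R) + n - p + 1 := by linarith [l.cast_nonneg (α := R)]
  have hleft_nonneg : 0 ≤ (k : R) + p := by positivity
  exact mul_lt_mul hleft hright hright_pos hleft_nonneg

theorem stmt_3_general (n p : R) (hp : 0 < p) (hpn : p < n + 1) (k l : ℕ) :
    coclosedEigenvalue n p k = closedEigenvalue n p l ↔ k = l + 1 ∧ n = 2 * p := by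
  constructor
  · intro h
    obtain hk | rfl | hk := lt_trichotomy k (l + 1)
    · exact absurd h
        (coclosedEigenvalue_lt_closedEigenvalue hp hpn.le (Nat.lt_succ_iff.mp hk)).ne
    · rw [coclosedEigenvalue_succ, add_eq_left, sub_eq_zero] at h
      exact ⟨rfl, h⟩
    · exact absurd h (closedEigenvalue_lt_coclosedEigenvalue hp.le hpn hk).ne'
  · rintro ⟨rfl, rfl⟩
    rw [coclosedEigenvalue_succ, sub_self, add_zero]

end Ordered

/-- Lemma 4.8 (iii): `(k+p)(k+n-p-1) = (l+p)(l+n-p+1)` iff `k = l+1` and `n = 2p`. -/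
theorem stmt_3 (n p : ℕ) (hp : 1 ≤ p) (hpn : p ≤ n) (k l : ℕ) :
    ((k : ℤ) + p) * ((k : ℤ) + n - p - 1) = ((l : ℤ) + p) * ((l : ℤ) + n - p + 1) ↔
      k = l + 1 ∧ n = 2 * p := by
  have h := stmt_3_general (n : ℤ) p (by omega) (by omega) k l
  exact h.trans (and_congr_right' (by norm_cast))
end

section
/- Let a, b ≥ 1 be natural numbers with a ≠ b, and let A : ℝ → ℕ be a weighted set whose support is a closed, discrete subset of [0,∞) containing at least one positive element. If γ, δ, γ', δ' > 0 are reals such that for every x ∈ ℝ one has a·A(x/γ) + b·A(x/δ) = a·A(x/γ') + b·A(x/δ'), then γ = γ' and δ = δ'. -/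
/-!
On the positive half-line, rescaling by `γ` is translation by `log γ` of the exponent `t` in
`x = exp t`. Read in this variable, a weighted set is a Hahn series: a closed discrete subset of `ℝ`
has only finitely many points in `[0, x]`, so its exponents are well-ordered. The combination
`a·(γA) + b·(δA)` becomes the product of `a T ^ log γ + b T ^ log δ` with the series of `A`. This
series is nonzero and can be cancelled, so the two binomials agree, and `a ≠ b` excludes a swap of
their exponents.
-/

section LogSeries

open Set HahnSeries

theorem isPWO_of_finite_inter_Iic {α : Type*} [LinearOrder α] {s : Set α}
    (hs : ∀ x ∈ s, (s ∩ Iic x).Finite) : s.IsPWO := by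
  refine IsWF.isPWO (isWF_iff_no_descending_seq.2 fun f hf hmem ↦ ?_)
  refine infinite_range_of_injective hf.injective ((hs (f 0) (hmem 0)).subset ?_)
  rintro _ ⟨n, rfl⟩
  exact ⟨hmem n, hf.antitone n.zero_le⟩

theorem isPWO_preimage_exp {s : Set ℝ} (hclosed : IsClosed s) (hdisc : IsDiscrete s) :
    (Real.exp ⁻¹' s).IsPWO := by
  refine isPWO_of_finite_inter_Iic fun t _ ↦ ?_
  have hfin : (s ∩ Icc 0 (Real.exp t)).Finite :=
    (isCompact_Icc.inter_left hclosed).finite (hdisc.mono inter_subset_left)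
  refine (hfin.preimage Real.exp_injective.injOn).subset ?_
  exact fun u ⟨hus, hut⟩ ↦ ⟨hus, (Real.exp_pos u).le, Real.exp_le_exp.2 hut⟩

theorem hahnSeries_single_add_single_inj {Γ M : Type*} [PartialOrder Γ] [AddCommMonoid M]
    {a b : M} (ha : a ≠ 0) (hb : b ≠ 0) (hadd : a + b ≠ 0) (hab : a ≠ b)
    {c d c' d' : Γ} :
    single c a + single d b = single c' a + single d' b ↔ c = c' ∧ d = d' := by
  classical
  refine ⟨fun h ↦ ?_, by rintro ⟨rfl, rfl⟩; rfl⟩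
  have hcoeff : Pi.single c a + Pi.single d b = (Pi.single c' a + Pi.single d' b : Γ → M) :=
    congrArg coeff h
  simpa only [hab, hadd, false_and, or_false] using
    (Pi.single_add_single_eq_single_add_single ha hb).1 hcoeff

/-- The weights of `A` at positive reals, as the Hahn series `∑ A(x) T ^ log x` over `x > 0`.
Rescaling `A` then amounts to multiplication by a monomial. -/
noncomputable def logSeries {R : Type*} [Zero R] (A : ℝ → R)
    (hA : (Real.exp ⁻¹' Function.support A).IsPWO) : HahnSeries ℝ R where
  coeff t := A (Real.exp t)
  isPWO_support' := hA

theorem coeff_logSeries {R : Type*} [Zero R] {A : ℝ → R}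
    (hA : (Real.exp ⁻¹' Function.support A).IsPWO) (t : ℝ) :
    (logSeries A hA).coeff t = A (Real.exp t) :=
  rfl

theorem logSeries_ne_zero {R : Type*} [Zero R] {A : ℝ → R}
    (hA : (Real.exp ⁻¹' Function.support A).IsPWO) {x : ℝ} (hx : 0 < x) (hAx : A x ≠ 0) :
    logSeries A hA ≠ 0 := by
  refine ne_zero_of_coeff_ne_zero (g := Real.log x) ?_
  simpa only [coeff_logSeries, Real.exp_log hx] using hAx

theorem coeff_single_log_mul_logSeries {R : Type*} [NonUnitalNonAssocSemiring R] {A : ℝ → R}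
    (hA : (Real.exp ⁻¹' Function.support A).IsPWO) {γ : ℝ} (hγ : 0 < γ) (a : R) (t : ℝ) :
    (single (Real.log γ) a * logSeries A hA).coeff t = a * A (Real.exp t / γ) := by
  rw [coeff_single_mul, coeff_logSeries, Real.exp_sub, Real.exp_log hγ]

theorem stmt_5_general {R : Type*} [NonUnitalNonAssocSemiring R] [IsCancelAdd R] [IsCancelMulZero R]
    {a b : R} (ha : a ≠ 0) (hb : b ≠ 0) (hadd : a + b ≠ 0) (hab : a ≠ b)
    {A : ℝ → R} (hclosed : IsClosed (Function.support A)) (hdisc : IsDiscrete (Function.support A))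
    (hpos : ∃ x, A x ≠ 0 ∧ 0 < x)
    {γ δ γ' δ' : ℝ} (hγ : 0 < γ) (hδ : 0 < δ) (hγ' : 0 < γ') (hδ' : 0 < δ')
    (h : ∀ x, a * A (x / γ) + b * A (x / δ) = a * A (x / γ') + b * A (x / δ')) :
    γ = γ' ∧ δ = δ' := by
  obtain ⟨x, hAx, hx⟩ := hpos
  have hA := isPWO_preimage_exp hclosed hdisc
  have hmul : (single (Real.log γ) a + single (Real.log δ) b) * logSeries A hA =
      (single (Real.log γ') a + single (Real.log δ') b) * logSeries A hA := by
    ext t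
    simpa only [add_mul, coeff_add, coeff_single_log_mul_logSeries hA, hγ, hδ, hγ', hδ']
      using h (Real.exp t)
  have hlog := mul_right_cancel₀ (logSeries_ne_zero hA hx hAx) hmul
  exact ((hahnSeries_single_add_single_inj ha hb hadd hab).1 hlog).imp
    (Real.log_injOn_pos hγ hγ') (Real.log_injOn_pos hδ hδ')

end LogSeries

/-- Theorem 3.18 (case `a ≠ b`): injectivity of `(γ, δ) ↦ a·(γA) ⊍ b·(δA)`. -/
theorem stmt_5 (a b : ℕ) (ha : 1 ≤ a) (hb : 1 ≤ b) (hab : a ≠ b)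
    (A : ℝ → ℕ)
    (hclosed : IsClosed {x : ℝ | A x ≠ 0}) (hdisc : DiscreteTopology {x : ℝ | A x ≠ 0})
    (hsub : {x : ℝ | A x ≠ 0} ⊆ Set.Ici (0 : ℝ))
    (hpos : ∃ x : ℝ, A x ≠ 0 ∧ 0 < x)
    (γ δ γ' δ' : ℝ) (hγ : 0 < γ) (hδ : 0 < δ) (hγ' : 0 < γ') (hδ' : 0 < δ')
    (h : ∀ x : ℝ, a * A (x / γ) + b * A (x / δ) = a * A (x / γ') + b * A (x / δ')) :
    γ = γ' ∧ δ = δ' :=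
  stmt_5_general (by omega) (by omega) (by omega) hab hclosed ⟨hdisc⟩ hpos hγ hδ hγ' hδ' h
end

section
/- Let a ≥ 1 be a natural number, and let A : ℝ → ℕ be a weighted set whose support is a closed, discrete subset of [0,∞) containing at least one positive element. If γ, δ, γ', δ' > 0 are reals such that for every x ∈ ℝ one has a·A(x/γ) + a·A(x/δ) = a·A(x/γ') + a·A(x/δ'), then {γ, δ} = {γ', δ'} as unordered pairs (i.e., (γ,δ) = (γ',δ') or (γ,δ) = (δ',γ')). -/
/-!
Let `m` be the least positive point of the support of `A`, and let `γ` be the least scale occurring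
in either of two multisets `S`, `T` of positive scales whose unions of rescaled copies of `A`
coincide. At the point `γ * m` a copy `δA` with `δ > γ` contributes nothing, since
`0 < γ * m / δ < m`, so the weight of the union there is the multiplicity of `γ` times `A m`.
Hence `γ` lies in both multisets; cancel one copy of `γA` on each side and repeat.
-/

open Function Set

theorem exists_isLeast_inter_Ioi {α : Type*} [LinearOrder α] [TopologicalSpace α]
    [CompactIccSpace α] {s : Set α} (hclosed : IsClosed s) (hdisc : IsDiscrete s) {a : α}
    (hne : (s ∩ Ioi a).Nonempty) : ∃ m, IsLeast (s ∩ Ioi a) m := by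
  obtain ⟨b, hbs, hab⟩ := hne
  have hfin : (s ∩ Icc a b).Finite :=
    (isCompact_Icc.inter_left hclosed).finite (hdisc.mono inter_subset_left)
  obtain ⟨m, ⟨hms, ham, hmb⟩, hmin⟩ := exists_min_image (s ∩ Ioc a b) id
    (hfin.subset (inter_subset_inter_right s Ioc_subset_Icc_self)) ⟨b, hbs, hab, le_rfl⟩
  refine ⟨m, ⟨hms, ham⟩, fun x ⟨hxs, hax⟩ => ?_⟩
  rcases le_total x b with hxb | hbx
  · exact hmin x ⟨hxs, hax, hxb⟩
  · exact hmb.trans hbx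

theorem multiset_pair_eq_pair_iff {α : Type*} {a b c d : α} :
    ({a, b} : Multiset α) = {c, d} ↔ a = c ∧ b = d ∨ a = d ∧ b = c := by
  simp only [Multiset.insert_eq_cons, Multiset.cons_eq_cons, Multiset.singleton_inj,
    Multiset.singleton_eq_cons_iff]
  grind

/-- The rescaled weighted set `rA`, with weights in an arbitrary type: the weight of `A` at `x`
is moved to `r * x`. Only `r ≠ 0` is meaningful, as `x / 0 = 0`. -/
def rescale {K M : Type*} [Div K] (A : K → M) (r : K) : K → M :=
  fun x => A (x / r)

section Rescale

variable {K M : Type*} [Semifield K] [LinearOrder K] [IsStrictOrderedRing K]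
  {A : K → M} {m γ : K} {S T : Multiset K}

theorem rescale_mul_eq_zero_of_lt [Zero M] (hm : IsLeast (support A ∩ Ioi 0) m) (hγ : 0 < γ)
    {δ : K} (hγδ : γ < δ) : rescale A δ (γ * m) = 0 := by
  have hδ : 0 < δ := hγ.trans hγδ
  have hm₀ : 0 < m := hm.1.2
  have hlt : γ * m / δ < m := by
    rw [div_lt_iff₀' hδ]
    gcongr
  by_contra hne
  exact hlt.not_ge (hm.2 ⟨hne, div_pos (mul_pos hγ hm₀) hδ⟩)

theorem sum_rescale_mul_of_le [AddCommMonoid M] (hm : IsLeast (support A ∩ Ioi 0) m)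
    (hγ : 0 < γ) (hle : ∀ δ ∈ S, γ ≤ δ) :
    (S.map (rescale A)).sum (γ * m) = S.count γ • A m := by
  rw [Pi.multiset_sum_apply, Multiset.map_map, Multiset.sum_map_eq_nsmul_single γ]
  · simp only [comp_apply, rescale, mul_div_cancel_left₀ m hγ.ne']
  · exact fun δ hne hδ => rescale_mul_eq_zero_of_lt hm hγ ((hle δ hδ).lt_of_ne' hne)

theorem sum_rescale_mul_ne_zero_iff_mem [AddCommMonoid M] [IsAddTorsionFree M]
    (hm : IsLeast (support A ∩ Ioi 0) m) (hγ : 0 < γ) (hle : ∀ δ ∈ S, γ ≤ δ) :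
    (S.map (rescale A)).sum (γ * m) ≠ 0 ↔ γ ∈ S := by
  have hAm : A m ≠ 0 := hm.1.1
  rw [sum_rescale_mul_of_le hm hγ hle, Ne, nsmul_eq_zero_iff, or_iff_right hAm,
    Multiset.count_eq_zero, not_not]

variable [AddCancelCommMonoid M] [IsAddTorsionFree M]

theorem exists_mem_and_mem_of_sum_rescale_eq (hm : IsLeast (support A ∩ Ioi 0) m)
    (hS : ∀ γ ∈ S, 0 < γ) (hT : ∀ γ ∈ T, 0 < γ) (hne : S + T ≠ 0)
    (h : (S.map (rescale A)).sum = (T.map (rescale A)).sum) : ∃ γ, γ ∈ S ∧ γ ∈ T := by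
  obtain ⟨γ, hγ, hmin⟩ := Multiset.exists_min_image id hne
  simp only [Multiset.mem_add, id] at hγ hmin
  have hγ₀ : 0 < γ := hγ.elim (hS γ) (hT γ)
  have hiff : γ ∈ S ↔ γ ∈ T := by
    rw [← sum_rescale_mul_ne_zero_iff_mem hm hγ₀ fun δ hδ => hmin δ (.inl hδ), h,
      sum_rescale_mul_ne_zero_iff_mem hm hγ₀ fun δ hδ => hmin δ (.inr hδ)]
  exact ⟨γ, by tauto⟩

theorem stmt_6_general (hm : IsLeast (support A ∩ Ioi 0) m)
    (hS : ∀ γ ∈ S, 0 < γ) (hT : ∀ γ ∈ T, 0 < γ)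
    (h : (S.map (rescale A)).sum = (T.map (rescale A)).sum) : S = T := by
  induction S using Multiset.strongInductionOn generalizing T with
  | ih S ih =>
    by_cases hne : S + T = 0
    · obtain ⟨rfl, rfl⟩ := add_eq_zero.mp hne
      rfl
    obtain ⟨γ, hγS, hγT⟩ := exists_mem_and_mem_of_sum_rescale_eq hm hS hT hne h
    obtain ⟨S, rfl⟩ := Multiset.exists_cons_of_mem hγS
    obtain ⟨T, rfl⟩ := Multiset.exists_cons_of_mem hγT
    rw [Multiset.forall_mem_cons] at hS hT
    simp only [Multiset.map_cons, Multiset.sum_cons, add_right_inj] at h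
    rw [ih S (Multiset.lt_cons_self S γ) hS.2 hT.2 h]

end Rescale

/-- Theorem 3.18 (case `n = 2p`): injectivity of `{γ, δ} ↦ a·(γA) ⊍ a·(δA)` on
unordered pairs. -/
theorem stmt_6 (a : ℕ) (ha : 1 ≤ a)
    (A : ℝ → ℕ)
    (hclosed : IsClosed {x : ℝ | A x ≠ 0}) (hdisc : DiscreteTopology {x : ℝ | A x ≠ 0})
    (hsub : {x : ℝ | A x ≠ 0} ⊆ Set.Ici (0 : ℝ))
    (hpos : ∃ x : ℝ, A x ≠ 0 ∧ 0 < x)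
    (γ δ γ' δ' : ℝ) (hγ : 0 < γ) (hδ : 0 < δ) (hγ' : 0 < γ') (hδ' : 0 < δ')
    (h : ∀ x : ℝ, a * A (x / γ) + a * A (x / δ) = a * A (x / γ') + a * A (x / δ')) :
    (γ = γ' ∧ δ = δ') ∨ (γ = δ' ∧ δ = γ') := by
  obtain ⟨m, hm⟩ := exists_isLeast_inter_Ioi hclosed ⟨hdisc⟩ hpos
  have ha₀ : a ≠ 0 := Nat.one_le_iff_ne_zero.mp ha
  have hsupp : support (fun x => a * A x) = support A := by
    ext x
    simp [ha₀]
  exact multiset_pair_eq_pair_iff.mp <|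
    stmt_6_general (A := fun x => a * A x) (m := m) (hsupp ▸ hm)
      (by simp [hγ, hδ]) (by simp [hγ', hδ']) (by funext x; simpa [rescale] using h x)
end

section
/- Let n ≥ 1, let Λ₁ and Λ₂ be full-rank lattices in ℝⁿ, let α, β > 0 be reals and let p be a natural number with 1 ≤ p ≤ n. Then Spec(Λ₁,α,β,p) = Spec(Λ₂,α,β,p) (as functions ℝ → ℕ) if and only if for every x ∈ ℝ, Nat.card {l ∈ Λ₁* : 4π²‖l‖² = x} = Nat.card {l ∈ Λ₂* : 4π²‖l‖² = x}. -/
open Real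
open scoped RealInnerProductSpace

/-- The dual lattice `Λ* = {v : ∀ w ∈ Λ, ⟨v,w⟩ ∈ ℤ}` of a lattice `Λ ⊆ ℝⁿ`. -/
def dualLattice {n : ℕ} (L : Submodule ℤ (EuclideanSpace ℝ (Fin n))) :
    Set (EuclideanSpace ℝ (Fin n)) :=
  {v | ∀ w ∈ L, ∃ m : ℤ, ⟪v, w⟫ = (m : ℝ)}

/-- The spectrum, with multiplicities, of the generalized Hodge-Laplace operator
`F_{αβ} = α dδ + β δd` on `p`-forms on the flat torus `ℝⁿ/Λ` (Theorem 3.9):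
`x ↦ C(n-1,p-1)·#{l ∈ Λ* : 4π²α‖l‖² = x} + C(n-1,p)·#{l ∈ Λ* : 4π²β‖l‖² = x}`. -/
noncomputable def torusSpec {n : ℕ} (L : Submodule ℤ (EuclideanSpace ℝ (Fin n)))
    (α β : ℝ) (p : ℕ) : ℝ → ℕ := fun x =>
  (n - 1).choose (p - 1) *
      Nat.card {l : EuclideanSpace ℝ (Fin n) //
        l ∈ dualLattice L ∧ 4 * π ^ 2 * α * ‖l‖ ^ 2 = x} +
    (n - 1).choose p *
      Nat.card {l : EuclideanSpace ℝ (Fin n) //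
        l ∈ dualLattice L ∧ 4 * π ^ 2 * β * ‖l‖ ^ 2 = x}

/-!
If `f` is the multiplicity function of the Laplacian on a torus, the weighted spectrum is
`x ↦ a * f (x / α) + b * f (x / β)` with `a ≠ 0`. Its value at `x = α * t` involves only `f t` and
`f (c * t)`, where `c = α / β`. The eigenvalues are non-negative and locally finite, so if two tori
had the same weighted spectrum but different multiplicities, there would be a least `t` at which
the multiplicities differ. When `c < 1` and `t > 0`, the terms at `c * t < t` agree and cancel,
leaving `a * f t = a * g t`; when `t = 0` or `c = 1` the factor is `a + b`. The case `c > 1` reduces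
to `c < 1` by exchanging the roles of `a` and `b`.
-/

theorem isWF_of_finite_inter_Iic {α : Type*} [Preorder α] {s : Set α}
    (hs : ∀ a, (s ∩ Set.Iic a).Finite) : s.IsWF := by
  refine Set.wellFoundedOn_iff_no_descending_seq.2 fun u hu => ?_
  have hle : ∀ k, u k ≤ u 0 := fun k => by
    rcases Nat.eq_zero_or_pos k with rfl | hk
    · exact le_rfl
    · exact (u.map_rel_iff.2 hk).le
  exact Set.infinite_of_injective_forall_mem u.injective (fun k => Set.mem_inter (hu k) (hle k))
    (hs (u 0))

section Dilation

variable {K M : Type*} [Field K] [LinearOrder K] [IsStrictOrderedRing K]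
  [AddCancelCommMonoid M] [IsAddTorsionFree M]
  {f g : K → M} {a b : ℕ} {c : K}

theorem eq_of_nsmul_add_nsmul_comp_mul_of_lt_one (hwf : {t | f t ≠ g t}.IsWF)
    (hneg : ∀ t < 0, f t = g t) (ha : a ≠ 0) (hc : c < 1)
    (h : ∀ t, a • f t + b • f (c * t) = a • g t + b • g (c * t)) : f = g := by
  by_contra hne
  have hex : {t | f t ≠ g t}.Nonempty := Function.ne_iff.1 hne
  set t := hwf.min hex
  have ht : f t ≠ g t := hwf.min_mem hex
  have eq_of_lt : ∀ s < t, f s = g s := fun s hs =>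
    by_contra fun hs' => hwf.not_lt_min hex hs' hs
  have ht0 : 0 ≤ t := le_of_not_gt fun h0 => ht (hneg t h0)
  have htt := h t
  rcases ht0.eq_or_lt with h0 | hpos
  · rw [← h0, mul_zero, ← add_nsmul, ← add_nsmul] at htt
    exact ht (h0 ▸ nsmul_right_injective (by lia) htt)
  · rw [eq_of_lt (c * t) (mul_lt_of_lt_one_left hpos hc)] at htt
    exact ht (nsmul_right_injective ha (add_right_cancel htt))

theorem eq_of_nsmul_add_nsmul_comp_mul (hwf : {t | f t ≠ g t}.IsWF)
    (hneg : ∀ t < 0, f t = g t) (ha : a ≠ 0)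
    (h : ∀ t, a • f t + b • f (c * t) = a • g t + b • g (c * t)) : f = g := by
  rcases lt_trichotomy c 1 with hc | rfl | hc
  · exact eq_of_nsmul_add_nsmul_comp_mul_of_lt_one hwf hneg ha hc h
  · funext t
    have ht := h t
    rw [one_mul, ← add_nsmul, ← add_nsmul] at ht
    exact nsmul_right_injective (by lia) ht
  · rcases eq_or_ne b 0 with rfl | hb
    · funext t
      have ht := h t
      simp only [zero_nsmul, add_zero] at ht
      exact nsmul_right_injective ha ht
    · refine eq_of_nsmul_add_nsmul_comp_mul_of_lt_one (b := a) hwf hneg hb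
        (inv_lt_one_of_one_lt₀ hc) fun t => ?_
      have ht := h (c⁻¹ * t)
      rwa [mul_inv_cancel_left₀ (zero_lt_one.trans hc).ne', add_comm, add_comm (a • g _)] at ht

end Dilation

theorem finite_inter_dualSubmodule {E : Type*} [NormedAddCommGroup E] [NormedSpace ℝ E]
    [FiniteDimensional ℝ E] {B : LinearMap.BilinForm ℝ E} (hB : B.Nondegenerate)
    {L : Submodule ℤ E} (hL : Submodule.span ℝ (L : Set E) = ⊤) {s : Set E}
    (hs : Bornology.IsBounded s) : (s ∩ B.dualSubmodule L).Finite := by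
  classical
  let b := Module.Basis.ofSpan hL.ge
  have hbL : Submodule.span ℤ (Set.range b) ≤ L :=
    Submodule.span_le.2 (Module.Basis.ofSpan_subset hL.ge)
  have hdual : B.dualSubmodule L ≤ Submodule.span ℤ (Set.range (B.dualBasis hB b)) := by
    rw [← B.dualSubmodule_span_of_basis hB b]
    exact fun v hv w hw => hv w (hbL hw)
  exact (ZSpan.setFinite_inter (B.dualBasis hB b) hs).subset (Set.inter_subset_inter_right s hdual)

theorem nondegenerate_innerₗ (E : Type*) [NormedAddCommGroup E] [InnerProductSpace ℝ E] :
    (innerₗ E).Nondegenerate :=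
  ⟨fun v hv => inner_self_eq_zero.1 (hv v), fun v hv => inner_self_eq_zero.1 (hv v)⟩

theorem isBounded_setOf_mul_norm_sq_le (E : Type*) [SeminormedAddCommGroup E] {c : ℝ}
    (hc : 0 < c) (R : ℝ) : Bornology.IsBounded {v : E | c * ‖v‖ ^ 2 ≤ R} :=
  isBounded_iff_forall_norm_le.2 ⟨√(R / c), fun _ hv => Real.le_sqrt_of_sq_le <|
    (le_div_iff₀' hc).2 hv⟩

section Torus

variable {n : ℕ} {L : Submodule ℤ (EuclideanSpace ℝ (Fin n))}

theorem dualLattice_eq_dualSubmodule (L : Submodule ℤ (EuclideanSpace ℝ (Fin n))) :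
    dualLattice L =
      LinearMap.BilinForm.dualSubmodule (innerₗ (EuclideanSpace ℝ (Fin n))) L := by
  ext v
  simp [dualLattice, LinearMap.BilinForm.mem_dualSubmodule, Submodule.mem_one, eq_comm]

/-- The multiplicity of `x` as an eigenvalue of the Laplace–Beltrami operator on functions on the
flat torus `ℝⁿ/Λ`: each dual vector `l` contributes the eigenfunction `exp(2πi⟨l, ·⟩)`. -/
noncomputable def laplaceMultiplicity (L : Submodule ℤ (EuclideanSpace ℝ (Fin n))) (x : ℝ) : ℕ :=
  Nat.card {l : EuclideanSpace ℝ (Fin n) // l ∈ dualLattice L ∧ 4 * π ^ 2 * ‖l‖ ^ 2 = x}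

theorem exists_mem_dualLattice_of_laplaceMultiplicity_ne_zero {x : ℝ}
    (hx : laplaceMultiplicity L x ≠ 0) : ∃ l ∈ dualLattice L, 4 * π ^ 2 * ‖l‖ ^ 2 = x :=
  let ⟨l, hl⟩ := (Nat.card_ne_zero.1 hx).1
  ⟨l, hl⟩

theorem laplaceMultiplicity_of_neg {x : ℝ} (hx : x < 0) : laplaceMultiplicity L x = 0 := by
  by_contra hne
  obtain ⟨l, -, rfl⟩ := exists_mem_dualLattice_of_laplaceMultiplicity_ne_zero hne
  exact hx.not_ge (by positivity)

theorem isWF_support_laplaceMultiplicity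
    (hL : Submodule.span ℝ (L : Set (EuclideanSpace ℝ (Fin n))) = ⊤) :
    (Function.support (laplaceMultiplicity L)).IsWF := by
  refine isWF_of_finite_inter_Iic fun R => ?_
  have hfin := finite_inter_dualSubmodule (nondegenerate_innerₗ _) hL
    (isBounded_setOf_mul_norm_sq_le _ (by positivity : 0 < 4 * π ^ 2) R)
  rw [← dualLattice_eq_dualSubmodule] at hfin
  refine (hfin.image fun l => 4 * π ^ 2 * ‖l‖ ^ 2).subset ?_
  rintro x ⟨hx, hxR⟩
  obtain ⟨l, hl, rfl⟩ := exists_mem_dualLattice_of_laplaceMultiplicity_ne_zero hx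
  exact ⟨l, ⟨hxR, hl⟩, rfl⟩

theorem laplaceMultiplicity_div (L : Submodule ℤ (EuclideanSpace ℝ (Fin n))) {α : ℝ}
    (hα : α ≠ 0) (x : ℝ) :
    laplaceMultiplicity L (x / α) = Nat.card {l : EuclideanSpace ℝ (Fin n) //
      l ∈ dualLattice L ∧ 4 * π ^ 2 * α * ‖l‖ ^ 2 = x} := by
  simp only [laplaceMultiplicity, eq_div_iff hα, mul_right_comm _ _ α]

theorem torusSpec_eq_laplaceMultiplicity (L : Submodule ℤ (EuclideanSpace ℝ (Fin n))) {α β : ℝ}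
    (hα : α ≠ 0) (hβ : β ≠ 0) (p : ℕ) (x : ℝ) :
    torusSpec L α β p x =
      (n - 1).choose (p - 1) • laplaceMultiplicity L (x / α) +
        (n - 1).choose p • laplaceMultiplicity L (x / β) := by
  simp only [torusSpec, laplaceMultiplicity_div L hα, laplaceMultiplicity_div L hβ, smul_eq_mul]

end Torus

theorem stmt_7_general {n : ℕ} {L₁ L₂ : Submodule ℤ (EuclideanSpace ℝ (Fin n))}
    (hL₁ : Submodule.span ℝ (L₁ : Set (EuclideanSpace ℝ (Fin n))) = ⊤)
    (hL₂ : Submodule.span ℝ (L₂ : Set (EuclideanSpace ℝ (Fin n))) = ⊤)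
    {α β : ℝ} (hα : α ≠ 0) (hβ : β ≠ 0) {p : ℕ} (hp : 1 ≤ p) (hpn : p ≤ n) :
    torusSpec L₁ α β p = torusSpec L₂ α β p ↔
      ∀ x, laplaceMultiplicity L₁ x = laplaceMultiplicity L₂ x := by
  refine ⟨fun h => congrFun ?_, fun h => ?_⟩
  · have hwf : {t | laplaceMultiplicity L₁ t ≠ laplaceMultiplicity L₂ t}.IsWF := by
      refine ((isWF_support_laplaceMultiplicity hL₁).union
        (isWF_support_laplaceMultiplicity hL₂)).mono fun t ht => ?_
      by_contra hsupp
      simp only [Set.mem_union, Function.mem_support, not_or, not_not] at hsupp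
      exact ht (hsupp.1.trans hsupp.2.symm)
    have hneg : ∀ t < 0, laplaceMultiplicity L₁ t = laplaceMultiplicity L₂ t := fun t ht => by
      rw [laplaceMultiplicity_of_neg ht, laplaceMultiplicity_of_neg ht]
    have hchoose : (n - 1).choose (p - 1) ≠ 0 :=
      (Nat.choose_pos ((Nat.sub_le_sub_iff_right (hp.trans hpn)).2 hpn)).ne'
    refine eq_of_nsmul_add_nsmul_comp_mul (b := (n - 1).choose p) (c := α / β) hwf hneg hchoose
      fun t => ?_
    have ht := congrFun h (α * t)
    simpa only [torusSpec_eq_laplaceMultiplicity _ hα hβ, mul_div_cancel_left₀ t hα,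
      mul_div_right_comm] using ht
  · funext x
    simp only [torusSpec_eq_laplaceMultiplicity _ hα hβ, h]

/-- Theorem 3.17: `F_{αβ,p}` is isospectral on two flat tori iff the Laplacian on
functions is. -/
theorem stmt_7 (n : ℕ) (hn : 1 ≤ n)
    (L₁ L₂ : Submodule ℤ (EuclideanSpace ℝ (Fin n)))
    [DiscreteTopology L₁] [IsZLattice ℝ L₁] [DiscreteTopology L₂] [IsZLattice ℝ L₂]
    (α β : ℝ) (hα : 0 < α) (hβ : 0 < β) (p : ℕ) (hp : 1 ≤ p) (hpn : p ≤ n) :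
    torusSpec L₁ α β p = torusSpec L₂ α β p ↔
      ∀ x : ℝ,
        Nat.card {l : EuclideanSpace ℝ (Fin n) //
          l ∈ dualLattice L₁ ∧ 4 * π ^ 2 * ‖l‖ ^ 2 = x} =
        Nat.card {l : EuclideanSpace ℝ (Fin n) //
          l ∈ dualLattice L₂ ∧ 4 * π ^ 2 * ‖l‖ ^ 2 = x} :=
  stmt_7_general IsZLattice.span_top IsZLattice.span_top hα.ne' hβ.ne' hp hpn
end

section
/- Let Λ₁ and Λ₂ be full-rank lattices in ℝ², let α, β > 0 be reals and let p ∈ {1, 2}. If Spec(Λ₁,α,β,p) = Spec(Λ₂,α,β,p) (as functions ℝ → ℕ), then there exists a linear isometric equivalence I : ℝ² ≃ ℝ² with I(Λ₁) = Λ₂ (i.e., the flat tori ℝ²/Λ₁ and ℝ²/Λ₂ are isometric). -/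
open Real
open scoped RealInnerProductSpace

/-!
The spectrum counts the dual lattice vectors of each length, once through `α` and once through `β`.
Near `0` only the zero vector is counted, and the superposition of the two counts propagates
equality of the length counts from a neighbourhood of `0` to all lengths, because the rescaling by
`α / β` or `β / α` is a contraction unless `α = β`.

A planar lattice has a Gauss-reduced basis `(u, v)`, which we find by minimising `‖u‖² + ‖v‖²`. For
the reduced Gram form with entries `a, b, c`, the numbers `a`, `c` and `a - 2b + c` are the least
values taken outside the origin, outside the first axis and outside both axes. Comparing, for each
of them in turn, how often the two forms take it shows that the counts determine `a`, `c` and then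
`b`. Equal Gram matrices give an isometry of the dual lattices, and double duality carries it back.
-/

open Module Submodule

lemma one_le_intCast_sq {x : ℤ} (hx : x ≠ 0) : (1 : ℝ) ≤ (x : ℝ) ^ 2 := by
  exact_mod_cast (one_le_sq_iff_one_le_abs x).mpr (Int.one_le_abs hx)

/-- The real binary quadratic form `a x² + 2 b x y + c y²`. The middle coefficient is halved so that
`a, b, c` are the entries of the Gram matrix. -/
@[ext]
structure BinaryQuadForm where
  a : ℝ
  b : ℝ
  c : ℝ

namespace BinaryQuadForm

/-- The value of a binary quadratic form at an integer vector. -/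
def eval (q : BinaryQuadForm) (z : ℤ × ℤ) : ℝ :=
  q.a * z.1 ^ 2 + 2 * q.b * (z.1 * z.2) + q.c * z.2 ^ 2

/-- The number of representations of `t` by a binary quadratic form over `ℤ`. -/
noncomputable def repCount (q : BinaryQuadForm) (t : ℝ) : ℕ :=
  {z | q.eval z = t}.ncard

/-- Gauss–Lagrange reducedness of a positive definite form, with the sign of `b` normalised, so that
each `GL₂(ℤ)`-class contains exactly one reduced form. -/
structure IsReduced (q : BinaryQuadForm) : Prop where
  a_pos : 0 < q.a
  b_nonneg : 0 ≤ q.b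
  two_mul_b_le_a : 2 * q.b ≤ q.a
  a_le_c : q.a ≤ q.c

variable {q q' : BinaryQuadForm} {z : ℤ × ℤ} {t : ℝ}

lemma eval_zero (q : BinaryQuadForm) : q.eval 0 = 0 := by simp [eval]

lemma eval_one_zero (q : BinaryQuadForm) : q.eval (1, 0) = q.a := by simp [eval]

lemma eval_zero_one (q : BinaryQuadForm) : q.eval (0, 1) = q.c := by simp [eval]

lemma eval_one_neg_one (q : BinaryQuadForm) : q.eval (1, -1) = q.a - 2 * q.b + q.c := by
  simp only [eval]
  push_cast
  ring

lemma eval_eq_sum_sq (q : BinaryQuadForm) (z : ℤ × ℤ) :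
    q.eval z = q.b * (z.1 + z.2 : ℝ) ^ 2 + (q.a - q.b) * z.1 ^ 2 + (q.c - q.b) * z.2 ^ 2 := by
  simp only [eval]
  ring

namespace IsReduced

lemma half_mul_le_eval (hq : q.IsReduced) (z : ℤ × ℤ) :
    q.a / 2 * (z.1 ^ 2 + z.2 ^ 2 : ℝ) ≤ q.eval z := by
  obtain ⟨-, hb, hba, hac⟩ := hq
  have hxy : 0 ≤ q.b * (z.1 + z.2 : ℝ) ^ 2 := by positivity
  have hx : q.a / 2 * (z.1 : ℝ) ^ 2 ≤ (q.a - q.b) * z.1 ^ 2 := by gcongr; linarith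
  have hy : q.a / 2 * (z.2 : ℝ) ^ 2 ≤ (q.c - q.b) * z.2 ^ 2 := by gcongr; linarith
  rw [eval_eq_sum_sq]
  linarith

lemma finite_setOf_eval_eq (hq : q.IsReduced) (t : ℝ) : {z | q.eval z = t}.Finite := by
  obtain ⟨K, hK⟩ := exists_int_ge (2 * t / q.a)
  refine (Set.finite_Icc (-K, -K) (K, K)).subset fun z (hz : q.eval z = t) ↦ ?_
  have hsum : (z.1 ^ 2 + z.2 ^ 2 : ℝ) ≤ K := by
    refine le_trans ?_ hK
    rw [le_div_iff₀ hq.a_pos, ← hz]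
    linarith [hq.half_mul_le_eval z]
  have hsum_int : z.1 ^ 2 + z.2 ^ 2 ≤ K := by exact_mod_cast hsum
  have hx : |z.1| ≤ K := by
    rw [Int.abs_eq_natAbs]
    linarith [Int.natAbs_le_self_sq z.1, sq_nonneg z.2]
  have hy : |z.2| ≤ K := by
    rw [Int.abs_eq_natAbs]
    linarith [Int.natAbs_le_self_sq z.2, sq_nonneg z.1]
  exact ⟨⟨(abs_le.mp hx).1, (abs_le.mp hy).1⟩, ⟨(abs_le.mp hx).2, (abs_le.mp hy).2⟩⟩

lemma a_sub_two_mul_b_add_c_le_eval (hq : q.IsReduced) (hx : z.1 ≠ 0) (hy : z.2 ≠ 0) :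
    q.a - 2 * q.b + q.c ≤ q.eval z := by
  obtain ⟨-, hb, hba, hac⟩ := hq
  have hxy : 0 ≤ q.b * (z.1 + z.2 : ℝ) ^ 2 := by positivity
  have hx' : q.a - q.b ≤ (q.a - q.b) * z.1 ^ 2 :=
    le_mul_of_one_le_right (by linarith) (one_le_intCast_sq hx)
  have hy' : q.c - q.b ≤ (q.c - q.b) * z.2 ^ 2 :=
    le_mul_of_one_le_right (by linarith) (one_le_intCast_sq hy)
  rw [eval_eq_sum_sq]
  linarith

lemma c_le_eval (hq : q.IsReduced) (hy : z.2 ≠ 0) : q.c ≤ q.eval z := by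
  by_cases hx : z.1 = 0
  · have hc : 0 ≤ q.c := hq.a_pos.le.trans hq.a_le_c
    simpa [eval, hx] using le_mul_of_one_le_right hc (one_le_intCast_sq hy)
  · linarith [hq.a_sub_two_mul_b_add_c_le_eval hx hy, hq.two_mul_b_le_a]

lemma a_le_eval (hq : q.IsReduced) (hz : z ≠ 0) : q.a ≤ q.eval z := by
  by_cases hy : z.2 = 0
  · have hx : z.1 ≠ 0 := fun hx ↦ hz (Prod.ext hx hy)
    simpa [eval, hy] using le_mul_of_one_le_right hq.a_pos.le (one_le_intCast_sq hx)
  · exact hq.a_le_c.trans (hq.c_le_eval hy)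

lemma eval_eq_of_repCount_eq (hq : q.IsReduced) (hcount : q.repCount t = q'.repCount t)
    (hsub : ∀ z, q'.eval z = t → q.eval z = t) (hz : q.eval z = t) : q'.eval z = t := by
  have hlevel : {z | q'.eval z = t} = {z | q.eval z = t} :=
    Set.eq_of_subset_of_ncard_le hsub hcount.le (hq.finite_setOf_eval_eq t)
  exact hlevel.symm.subset hz

lemma a_le_of_repCount_eq (hq : q.IsReduced) (hq' : q'.IsReduced)
    (hcount : q.repCount = q'.repCount) : q'.a ≤ q.a := by
  by_contra! hlt
  have hempty : ∀ z, q'.eval z ≠ q.a := by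
    intro z hz
    rcases eq_or_ne z 0 with rfl | h0
    · exact hq.a_pos.ne (q'.eval_zero.symm.trans hz)
    · linarith [hq'.a_le_eval h0]
  exact hempty (1, 0) <| hq.eval_eq_of_repCount_eq (congrFun hcount _)
    (fun z hz ↦ (hempty z hz).elim) q.eval_one_zero

lemma c_le_of_repCount_eq (hq : q.IsReduced) (hq' : q'.IsReduced)
    (hcount : q.repCount = q'.repCount) (ha : q.a = q'.a) : q'.c ≤ q.c := by
  by_contra! hlt
  have haxis : ∀ z, q'.eval z = q.c → z.2 = 0 := by
    intro z hz
    by_contra hy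
    linarith [hq'.c_le_eval hy]
  have heval : q'.eval (0, 1) = q.c := hq.eval_eq_of_repCount_eq (congrFun hcount _)
    (fun z hz ↦ by simpa [eval, haxis z hz, ha] using hz) q.eval_zero_one
  exact one_ne_zero (haxis _ heval)

lemma b_le_of_repCount_eq (hq : q.IsReduced) (hq' : q'.IsReduced)
    (hcount : q.repCount = q'.repCount) (ha : q.a = q'.a) (hc : q.c = q'.c) : q.b ≤ q'.b := by
  by_contra! hlt
  have haxes : ∀ z, q'.eval z = q.a - 2 * q.b + q.c → z.1 = 0 ∨ z.2 = 0 := by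
    intro z hz
    by_contra! h0
    linarith [hq'.a_sub_two_mul_b_add_c_le_eval h0.1 h0.2]
  have heval : q'.eval (1, -1) = q.a - 2 * q.b + q.c :=
    hq.eval_eq_of_repCount_eq (congrFun hcount _)
      (fun z hz ↦ by rcases haxes z hz with h0 | h0 <;> simpa [eval, h0, ha, hc] using hz)
      q.eval_one_neg_one
  simpa using haxes _ heval

theorem eq_of_repCount_eq (hq : q.IsReduced) (hq' : q'.IsReduced)
    (hcount : q.repCount = q'.repCount) : q = q' := by
  have ha : q.a = q'.a :=
    le_antisymm (hq'.a_le_of_repCount_eq hq hcount.symm) (hq.a_le_of_repCount_eq hq' hcount)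
  have hc : q.c = q'.c :=
    le_antisymm (hq'.c_le_of_repCount_eq hq hcount.symm ha.symm)
      (hq.c_le_of_repCount_eq hq' hcount ha)
  have hb : q.b = q'.b :=
    le_antisymm (hq.b_le_of_repCount_eq hq' hcount ha hc)
      (hq'.b_le_of_repCount_eq hq hcount.symm ha.symm hc.symm)
  exact BinaryQuadForm.ext ha hb hc

end IsReduced

end BinaryQuadForm

section NormSqCount

variable {E : Type*} [NormedAddCommGroup E]

/-- The number of vectors of squared length `t` in `M`. As a function of `t` this is the length
spectrum of the torus `E / M`, with multiplicities. -/
noncomputable def normSqCount (M : Submodule ℤ E) (t : ℝ) : ℕ :=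
  {v | v ∈ M ∧ ‖v‖ ^ 2 = t}.ncard

lemma exists_forall_lt_normSqCount_eq (M : Submodule ℤ E) [DiscreteTopology M] :
    ∃ ε > 0, ∀ t < ε, normSqCount M t = if t = 0 then 1 else 0 := by
  obtain ⟨ε, hε, hball⟩ := Metric.exists_ball_inter_eq_singleton_of_mem_discrete
    (DiscreteTopology.isDiscrete (s := (M : Set E))) M.zero_mem
  refine ⟨ε ^ 2, by positivity, fun t ht ↦ ?_⟩
  have hzero : ∀ v ∈ M, ‖v‖ ^ 2 = t → v = 0 := fun v hv hvt ↦ by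
    have hmem : v ∈ Metric.ball 0 ε ∩ M :=
      ⟨mem_ball_zero_iff.mpr (lt_of_pow_lt_pow_left₀ 2 hε.le (hvt ▸ ht)), hv⟩
    rwa [hball] at hmem
  rw [normSqCount]
  split_ifs with h0
  · rw [Set.ncard_eq_one]
    exact ⟨0, Set.ext fun v ↦ ⟨fun hv ↦ hzero v hv.1 hv.2, fun hv ↦ by simp_all⟩⟩
  · have hempty : {v | v ∈ M ∧ ‖v‖ ^ 2 = t} = ∅ :=
      Set.eq_empty_of_forall_notMem fun v hv ↦ h0 <| by simp [← hv.2, hzero v hv.1 hv.2]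
    rw [hempty, Set.ncard_empty]

lemma finite_setOf_mem_and_norm_sq_le [ProperSpace E] (M : Submodule ℤ E) [DiscreteTopology M]
    (R : ℝ) : {v | v ∈ M ∧ ‖v‖ ^ 2 ≤ R}.Finite := by
  have : DiscreteTopology M.toAddSubgroup := ‹DiscreteTopology M›
  have hclosed : IsClosed (M : Set E) := AddSubgroup.isClosed_of_discrete (H := M.toAddSubgroup)
  refine (Metric.finite_isBounded_inter_isClosed (DiscreteTopology.isDiscrete (s := (M : Set E)))
    (Metric.isBounded_closedBall (x := (0 : E)) (r := √R)) hclosed).subset ?_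
  exact fun v hv ↦ ⟨mem_closedBall_zero_iff.mpr (Real.le_sqrt_of_sq_le hv.2), hv.1⟩

lemma exists_span_int_range_eq_forall_sum_norm_sq_le [ProperSpace E] {ι : Type*} [Fintype ι]
    (M : Submodule ℤ E) [DiscreteTopology M] {v₀ : ι → E} (h₀ : span ℤ (Set.range v₀) = M) :
    ∃ v : ι → E, span ℤ (Set.range v) = M ∧
      ∀ w : ι → E, span ℤ (Set.range w) = M → ∑ i, ‖v i‖ ^ 2 ≤ ∑ i, ‖w i‖ ^ 2 := by
  let R := ∑ i, ‖v₀ i‖ ^ 2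
  let S : Set (ι → E) := {v | span ℤ (Set.range v) = M ∧ ∑ i, ‖v i‖ ^ 2 ≤ R}
  have hfin : S.Finite := by
    refine (Set.Finite.pi' fun _ ↦ finite_setOf_mem_and_norm_sq_le M R).subset ?_
    rintro v ⟨hspan, hle⟩ i
    refine ⟨hspan ▸ mem_span_of_mem (Set.mem_range_self i), le_trans ?_ hle⟩
    exact Finset.single_le_sum (f := fun i ↦ ‖v i‖ ^ 2) (fun _ _ ↦ by positivity)
      (Finset.mem_univ i)
  obtain ⟨v, ⟨hspan, hle⟩, hmin⟩ :=
    Set.exists_min_image S (fun v ↦ ∑ i, ‖v i‖ ^ 2) hfin ⟨v₀, h₀, le_rfl⟩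
  refine ⟨v, hspan, fun w hw ↦ ?_⟩
  rcases le_total (∑ i, ‖w i‖ ^ 2) R with hR | hR
  · exact hmin w ⟨hw, hR⟩
  · exact hle.trans hR

end NormSqCount

section SpanPair

variable {R M : Type*} [Ring R] [AddCommGroup M] [Module R M]

lemma span_pair_add_smul_right (u v : M) (r : R) : span R {u, v + r • u} = span R {u, v} := by
  apply le_antisymm <;> rw [span_le, Set.pair_subset_iff]
  · exact ⟨mem_span_of_mem (by simp), mem_span_pair.mpr ⟨r, 1, by rw [one_smul, add_comm]⟩⟩
  · exact ⟨mem_span_of_mem (by simp), mem_span_pair.mpr ⟨-r, 1, by rw [one_smul, neg_smul]; abel⟩⟩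

lemma span_pair_neg_right (u v : M) : span R {u, -v} = span R {u, v} := by
  rw [span_insert, span_insert, ← Set.neg_singleton, span_neg]

end SpanPair

section Lattice

variable {E F : Type*} [NormedAddCommGroup E] [InnerProductSpace ℝ E]
  [NormedAddCommGroup F] [InnerProductSpace ℝ F]

lemma exists_basis_span_int_eq [FiniteDimensional ℝ E] {n : ℕ} (hn : finrank ℝ E = n)
    (L : Submodule ℤ E) [DiscreteTopology L] [IsZLattice ℝ L] :
    ∃ b : Basis (Fin n) ℝ E, span ℤ (Set.range b) = L :=
  ⟨(finBasisOfFinrankEq ℤ L ((ZLattice.rank ℝ L).trans hn)).ofZLatticeBasis ℝ L,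
    Basis.ofZLatticeBasis_span ℝ L _⟩

lemma exists_basis_coe_eq_of_span_int_eq {ι : Type*} [Fintype ι] (L : Submodule ℤ E)
    [DiscreteTopology L] [IsZLattice ℝ L] {v : ι → E} (hι : Fintype.card ι = finrank ℝ E)
    (hv : span ℤ (Set.range v) = L) : ∃ b : Basis ι ℝ E, ⇑b = v :=
  ⟨basisOfTopLeSpanOfCardEqFinrank v
    (by rw [← span_span_of_tower ℤ, hv, IsZLattice.span_top]) hι,
    coe_basisOfTopLeSpanOfCardEqFinrank ..⟩

/-- The dual lattice, as a submodule of an arbitrary real inner product space; on `ℝⁿ` its carrier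
is `dualLattice`. -/
noncomputable def innerDual (L : Submodule ℤ E) : Submodule ℤ E :=
  LinearMap.BilinForm.dualSubmodule (innerₗ E) L

lemma mem_innerDual {L : Submodule ℤ E} {v : E} :
    v ∈ innerDual L ↔ ∀ w ∈ L, ∃ m : ℤ, ⟪v, w⟫ = m := by
  simp [innerDual, LinearMap.BilinForm.mem_dualSubmodule, Submodule.mem_one, eq_comm]

lemma mem_dualLattice_iff_mem_innerDual {n : ℕ} {L : Submodule ℤ (EuclideanSpace ℝ (Fin n))}
    {v : EuclideanSpace ℝ (Fin n)} : v ∈ dualLattice L ↔ v ∈ innerDual L :=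
  mem_innerDual.symm

lemma image_innerDual {L : Submodule ℤ E} {L' : Submodule ℤ F} (I : E ≃ₗᵢ[ℝ] F)
    (h : I '' L = L') : I '' innerDual L = innerDual L' := by
  ext v
  obtain ⟨x, rfl⟩ := I.surjective v
  rw [I.injective.mem_set_image]
  simp only [SetLike.mem_coe, mem_innerDual]
  simp only [← SetLike.mem_coe, ← h, Set.forall_mem_image, I.inner_map_map]

lemma nondegenerate_innerₗ_s12 : LinearMap.BilinForm.Nondegenerate (innerₗ E) :=
  ⟨fun x hx ↦ inner_self_eq_zero.mp (hx x), fun x hx ↦ inner_self_eq_zero.mp (hx x)⟩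

section Dual

variable [FiniteDimensional ℝ E] (L : Submodule ℤ E) [DiscreteTopology L] [IsZLattice ℝ L]

lemma exists_basis_span_int_eq_innerDual :
    ∃ b : Basis (Fin (finrank ℝ E)) ℝ E, span ℤ (Set.range b) = innerDual L := by
  obtain ⟨b, hb⟩ := exists_basis_span_int_eq rfl L
  refine ⟨LinearMap.BilinForm.dualBasis (innerₗ E) nondegenerate_innerₗ_s12 b, ?_⟩
  rw [← LinearMap.BilinForm.dualSubmodule_span_of_basis, hb, innerDual]

instance : DiscreteTopology (innerDual L) := by
  obtain ⟨b, hb⟩ := exists_basis_span_int_eq_innerDual L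
  exact hb ▸ inferInstance

instance : IsZLattice ℝ (innerDual L) := by
  obtain ⟨b, hb⟩ := exists_basis_span_int_eq_innerDual L
  exact ⟨hb ▸ ZSpan.span_top b⟩

lemma innerDual_innerDual : innerDual (innerDual L) = L := by
  obtain ⟨b, rfl⟩ := exists_basis_span_int_eq rfl L
  exact LinearMap.BilinForm.dualSubmodule_dualSubmodule_of_basis _ nondegenerate_innerₗ_s12
    (LinearMap.BilinForm.isSymm_iff.mpr isSymm_inner) b

end Dual

/-- The Gram matrix of the pair `(u, v)`, as a quadratic form in the coefficients of
`x • u + y • v`. -/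
noncomputable def gramForm (u v : E) : BinaryQuadForm :=
  ⟨‖u‖ ^ 2, ⟪u, v⟫, ‖v‖ ^ 2⟩

lemma eval_gramForm (u v : E) (z : ℤ × ℤ) :
    (gramForm u v).eval z = ‖z.1 • u + z.2 • v‖ ^ 2 := by
  simp only [gramForm, BinaryQuadForm.eval, ← Int.cast_smul_eq_zsmul ℝ, norm_add_sq_real, norm_smul,
    real_inner_smul_left, real_inner_smul_right, mul_pow, Real.norm_eq_abs, sq_abs]
  ring

lemma range_fin_two {α : Type*} (f : Fin 2 → α) : Set.range f = {f 0, f 1} := by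
  ext x
  simp [Fin.exists_fin_two, eq_comm]

lemma repCount_gramForm {u v : E} (huv : LinearIndependent ℝ ![u, v]) :
    (gramForm u v).repCount = normSqCount (span ℤ {u, v}) := by
  ext t
  have hinj : Function.Injective fun z : ℤ × ℤ ↦ z.1 • u + z.2 • v := by
    intro z w hzw
    simp only [← Int.cast_smul_eq_zsmul ℝ] at hzw
    obtain ⟨h1, h2⟩ := huv.eq_of_pair hzw
    exact Prod.ext (Int.cast_injective h1) (Int.cast_injective h2)
  have himage : (fun z : ℤ × ℤ ↦ z.1 • u + z.2 • v) '' {z | (gramForm u v).eval z = t} =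
      {w | w ∈ span ℤ {u, v} ∧ ‖w‖ ^ 2 = t} := by
    ext w
    simp only [Set.mem_image, Set.mem_ofPred_eq, eval_gramForm, mem_span_pair, Prod.exists]
    grind
  rw [BinaryQuadForm.repCount, normSqCount, ← himage, Set.ncard_image_of_injective _ hinj]

lemma repCount_gramForm_basis (b : Basis (Fin 2) ℝ E) :
    (gramForm (b 0) (b 1)).repCount = normSqCount (span ℤ (Set.range b)) := by
  rw [range_fin_two]
  refine repCount_gramForm ?_
  convert b.linearIndependent
  exact FinVec.etaExpand_eq _

lemma two_mul_abs_inner_le {u v : E} (hadd : ‖v‖ ^ 2 ≤ ‖v + u‖ ^ 2)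
    (hsub : ‖v‖ ^ 2 ≤ ‖v - u‖ ^ 2) : 2 * |⟪u, v⟫| ≤ ‖u‖ ^ 2 := by
  rw [norm_add_sq_real, real_inner_comm] at hadd
  rw [norm_sub_sq_real, real_inner_comm] at hsub
  rcases abs_cases ⟪u, v⟫ with h | h <;> linarith

lemma exists_span_int_pair_eq_two_mul_abs_inner_le [ProperSpace E] (u₀ v₀ : E)
    [DiscreteTopology (span ℤ {u₀, v₀})] :
    ∃ u v : E, span ℤ {u, v} = span ℤ {u₀, v₀} ∧ 2 * |⟪u, v⟫| ≤ ‖u‖ ^ 2 ∧ ‖u‖ ^ 2 ≤ ‖v‖ ^ 2 := by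
  obtain ⟨w, hspan, hmin⟩ := exists_span_int_range_eq_forall_sum_norm_sq_le (v₀ := ![u₀, v₀])
    (span ℤ {u₀, v₀}) (by rw [Matrix.range_cons_cons_empty])
  obtain ⟨u, v, rfl⟩ : ∃ u v, w = ![u, v] := ⟨w 0, w 1, (FinVec.etaExpand_eq w).symm⟩
  rw [Matrix.range_cons_cons_empty] at hspan
  replace hmin (u' v' : E) (h : span ℤ {u', v'} = span ℤ {u₀, v₀}) :
      ‖u‖ ^ 2 + ‖v‖ ^ 2 ≤ ‖u'‖ ^ 2 + ‖v'‖ ^ 2 := by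
    simpa using hmin ![u', v'] (by rw [Matrix.range_cons_cons_empty, h])
  wlog huv : ‖u‖ ^ 2 ≤ ‖v‖ ^ 2 generalizing u v
  · refine this v u (Set.pair_comm u v ▸ hspan) (fun u' v' h ↦ ?_) (le_of_not_ge huv)
    rw [add_comm]
    exact hmin u' v' h
  refine ⟨u, v, hspan, two_mul_abs_inner_le ?_ ?_, huv⟩
  · have hadd := hmin u (v + u) (by simpa [hspan] using span_pair_add_smul_right u v (1 : ℤ))
    linarith
  · have hsub := hmin u (v - u)
      (by simpa [hspan, sub_eq_add_neg] using span_pair_add_smul_right u v (-1 : ℤ))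
    linarith

lemma exists_span_int_pair_eq_inner_nonneg [ProperSpace E] (u₀ v₀ : E)
    [DiscreteTopology (span ℤ {u₀, v₀})] :
    ∃ u v : E, span ℤ {u, v} = span ℤ {u₀, v₀} ∧
      0 ≤ ⟪u, v⟫ ∧ 2 * ⟪u, v⟫ ≤ ‖u‖ ^ 2 ∧ ‖u‖ ^ 2 ≤ ‖v‖ ^ 2 := by
  obtain ⟨u, v, hspan, hinner, hle⟩ := exists_span_int_pair_eq_two_mul_abs_inner_le u₀ v₀
  rcases le_total 0 ⟪u, v⟫ with hsign | hsign
  · exact ⟨u, v, hspan, hsign, abs_of_nonneg hsign ▸ hinner, hle⟩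
  · refine ⟨u, -v, (span_pair_neg_right u v).trans hspan, ?_, ?_, by rwa [norm_neg]⟩
    · rwa [inner_neg_right, neg_nonneg]
    · rwa [inner_neg_right, ← abs_of_nonpos hsign]

theorem exists_basis_isReduced_gramForm (hE : finrank ℝ E = 2) (L : Submodule ℤ E)
    [DiscreteTopology L] [IsZLattice ℝ L] :
    ∃ b : Basis (Fin 2) ℝ E, span ℤ (Set.range b) = L ∧ (gramForm (b 0) (b 1)).IsReduced := by
  have : FiniteDimensional ℝ E := .of_finrank_pos (by lia)
  obtain ⟨b₀, hb₀⟩ := exists_basis_span_int_eq hE L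
  rw [range_fin_two] at hb₀
  subst hb₀
  obtain ⟨u, v, hspan, hnonneg, htwo, hle⟩ :=
    exists_span_int_pair_eq_inner_nonneg (b₀ 0) (b₀ 1)
  have hrange : span ℤ (Set.range ![u, v]) = span ℤ {b₀ 0, b₀ 1} := by
    rw [Matrix.range_cons_cons_empty, hspan]
  obtain ⟨b, hb⟩ := exists_basis_coe_eq_of_span_int_eq _ (by simp [hE]) hrange
  have hu : b 0 = u := congrFun hb 0
  have hv : b 1 = v := congrFun hb 1
  have hpos : 0 < ‖u‖ ^ 2 := pow_pos (norm_pos_iff.mpr (hu ▸ b.ne_zero 0)) 2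
  exact ⟨b, hb ▸ hrange, hu ▸ hv ▸ ⟨hpos, hnonneg, htwo, hle⟩⟩

lemma exists_linearIsometryEquiv_apply_basis_eq {ι : Type*} (b : Basis ι ℝ E) (b' : Basis ι ℝ F)
    (h : ∀ i j, ⟪b i, b j⟫ = ⟪b' i, b' j⟫) : ∃ I : E ≃ₗᵢ[ℝ] F, ∀ i, I (b i) = b' i := by
  let f : E ≃ₗ[ℝ] F := b.equiv b' (Equiv.refl ι)
  have hf (i : ι) : f (b i) = b' i := by simp [f]
  have hinner : (innerₗ F).compl₁₂ f.toLinearMap f.toLinearMap = innerₗ E :=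
    LinearMap.BilinForm.ext_basis b fun i j ↦ by simp [hf, h]
  exact ⟨f.isometryOfInner fun x y ↦ LinearMap.congr_fun₂ hinner x y, hf⟩

lemma exists_linearIsometryEquiv_image_eq_of_gramForm_eq {b : Basis (Fin 2) ℝ E}
    {b' : Basis (Fin 2) ℝ F} (h : gramForm (b 0) (b 1) = gramForm (b' 0) (b' 1)) :
    ∃ I : E ≃ₗᵢ[ℝ] F, I '' span ℤ (Set.range b) = span ℤ (Set.range b') := by
  simp only [gramForm, BinaryQuadForm.mk.injEq] at h
  obtain ⟨h00, h01, h11⟩ := h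
  have h10 : ⟪b 1, b 0⟫ = ⟪b' 1, b' 0⟫ := by rw [real_inner_comm, h01, real_inner_comm]
  obtain ⟨I, hI⟩ := exists_linearIsometryEquiv_apply_basis_eq b b' <| by
    simp [Fin.forall_fin_two, h00, h01, h10, h11]
  have hb' : ⇑(b.map I.toLinearEquiv) = b' := funext hI
  refine ⟨I, ?_⟩
  rw [← hb', ← ZSpan.map]
  rfl

theorem exists_linearIsometryEquiv_image_eq_of_normSqCount_eq (hE : finrank ℝ E = 2)
    (hF : finrank ℝ F = 2) {L : Submodule ℤ E} {L' : Submodule ℤ F} [DiscreteTopology L]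
    [IsZLattice ℝ L] [DiscreteTopology L'] [IsZLattice ℝ L']
    (h : normSqCount L = normSqCount L') : ∃ I : E ≃ₗᵢ[ℝ] F, I '' L = L' := by
  obtain ⟨b, rfl, hb⟩ := exists_basis_isReduced_gramForm hE L
  obtain ⟨b', rfl, hb'⟩ := exists_basis_isReduced_gramForm hF L'
  refine exists_linearIsometryEquiv_image_eq_of_gramForm_eq (hb.eq_of_repCount_eq hb' ?_)
  rw [repCount_gramForm_basis, repCount_gramForm_basis, h]

end Lattice

section Spectrum

-- Iterating `s ↦ r * s` contracts every point into the region where `f` and `g` agree.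
lemma eq_of_mul_add_mul_comp_mul_eq {f g : ℝ → ℕ} {a b : ℕ} {r ε : ℝ} (ha : a ≠ 0) (hr : |r| < 1)
    (hε : 0 < ε) (hfg : Set.EqOn f g (Set.Iio ε))
    (h : ∀ s, a * f s + b * f (r * s) = a * g s + b * g (r * s)) : f = g := by
  have hpow (k : ℕ) : ∀ s, r ^ k * s < ε → f s = g s := by
    induction k with
    | zero => exact fun s hs ↦ hfg (by simpa using hs)
    | succ k ih =>
      intro s hs
      have hrs : f (r * s) = g (r * s) := ih (r * s) (by rwa [← mul_assoc, ← pow_succ])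
      have hmul := h s
      rw [hrs] at hmul
      exact Nat.eq_of_mul_eq_mul_left (Nat.pos_of_ne_zero ha) (Nat.add_right_cancel hmul)
  ext s
  have htendsto : Filter.Tendsto (fun k : ℕ ↦ r ^ k * s) Filter.atTop (nhds 0) := by
    simpa using (tendsto_pow_atTop_nhds_zero_of_abs_lt_one hr).mul_const s
  obtain ⟨k, hk⟩ := (htendsto.eventually_lt_const hε).exists
  exact hpow k s hk

lemma abs_div_lt_one {α β : ℝ} (hα : 0 < α) (h : α < β) : |α / β| < 1 := by
  rw [abs_div, abs_of_pos hα, abs_of_pos (hα.trans h)]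
  exact (div_lt_one (hα.trans h)).mpr h

lemma eq_of_mul_comp_div_add_mul_comp_div_eq {f g : ℝ → ℕ} {a b : ℕ} {α β ε : ℝ} (ha : a ≠ 0)
    (hα : 0 < α) (hβ : 0 < β) (hε : 0 < ε) (hfg : Set.EqOn f g (Set.Iio ε))
    (h : ∀ x, a * f (x / α) + b * f (x / β) = a * g (x / α) + b * g (x / β)) : f = g := by
  rcases lt_trichotomy α β with hlt | rfl | hlt
  · exact eq_of_mul_add_mul_comp_mul_eq (r := α / β) ha (abs_div_lt_one hα hlt) hε hfg fun s ↦ by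
      simpa only [mul_div_cancel_left₀ s hα.ne', mul_div_right_comm] using h (α * s)
  · ext s
    have hs := h (α * s)
    rw [mul_div_cancel_left₀ s hα.ne', ← add_mul, ← add_mul] at hs
    exact Nat.eq_of_mul_eq_mul_left (by lia) hs
  · rcases eq_or_ne b 0 with rfl | hb
    · ext s
      have hs := h (α * s)
      rw [mul_div_cancel_left₀ s hα.ne', zero_mul, zero_mul] at hs
      exact Nat.eq_of_mul_eq_mul_left (by lia) hs
    · exact eq_of_mul_add_mul_comp_mul_eq (r := β / α) hb (abs_div_lt_one hβ hlt) hε hfg fun s ↦ by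
        have hs := h (β * s)
        rwa [mul_div_cancel_left₀ s hβ.ne', mul_div_right_comm, add_comm, add_comm (a * _)] at hs

lemma torusSpec_apply {n : ℕ} (L : Submodule ℤ (EuclideanSpace ℝ (Fin n))) {α β : ℝ} (hα : α ≠ 0)
    (hβ : β ≠ 0) (p : ℕ) (x : ℝ) :
    torusSpec L α β p x =
      (n - 1).choose (p - 1) * normSqCount (innerDual L) (x / (4 * π ^ 2 * α)) +
        (n - 1).choose p * normSqCount (innerDual L) (x / (4 * π ^ 2 * β)) := by
  have hcard {γ : ℝ} (hγ : γ ≠ 0) :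
      Nat.card {l // l ∈ dualLattice L ∧ 4 * π ^ 2 * γ * ‖l‖ ^ 2 = x} =
        normSqCount (innerDual L) (x / (4 * π ^ 2 * γ)) := by
    have hpos : 4 * π ^ 2 * γ ≠ 0 := by positivity
    simp only [normSqCount, mem_dualLattice_iff_mem_innerDual, eq_div_iff_mul_eq hpos,
      mul_comm (‖_‖ ^ 2)]
    rfl
  rw [torusSpec, hcard hα, hcard hβ]

theorem normSqCount_innerDual_eq_of_torusSpec_eq {n p : ℕ} (hp : p ≤ n)
    {L₁ L₂ : Submodule ℤ (EuclideanSpace ℝ (Fin n))} [DiscreteTopology L₁] [IsZLattice ℝ L₁]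
    [DiscreteTopology L₂] [IsZLattice ℝ L₂] {α β : ℝ} (hα : 0 < α) (hβ : 0 < β)
    (h : torusSpec L₁ α β p = torusSpec L₂ α β p) :
    normSqCount (innerDual L₁) = normSqCount (innerDual L₂) := by
  obtain ⟨ε₁, hε₁, hL₁⟩ := exists_forall_lt_normSqCount_eq (innerDual L₁)
  obtain ⟨ε₂, hε₂, hL₂⟩ := exists_forall_lt_normSqCount_eq (innerDual L₂)
  have hsmall : Set.EqOn (normSqCount (innerDual L₁)) (normSqCount (innerDual L₂))
      (Set.Iio (min ε₁ ε₂)) := fun t ht ↦ by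
    rw [hL₁ t (lt_min_iff.mp ht).1, hL₂ t (lt_min_iff.mp ht).2]
  have hchoose : (n - 1).choose (p - 1) ≠ 0 := Nat.choose_ne_zero (by lia)
  refine eq_of_mul_comp_div_add_mul_comp_div_eq (b := (n - 1).choose p) hchoose
    (α := 4 * π ^ 2 * α) (β := 4 * π ^ 2 * β) (by positivity) (by positivity)
    (lt_min hε₁ hε₂) hsmall fun x ↦ ?_
  rw [← torusSpec_apply L₁ hα.ne' hβ.ne', ← torusSpec_apply L₂ hα.ne' hβ.ne', h]

end Spectrum

/-- The 2-dimensional case: isospectrality of `F_{αβ,p}` on flat 2-tori implies isometry. -/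
theorem stmt_12
    (L₁ L₂ : Submodule ℤ (EuclideanSpace ℝ (Fin 2)))
    [DiscreteTopology L₁] [IsZLattice ℝ L₁] [DiscreteTopology L₂] [IsZLattice ℝ L₂]
    (α β : ℝ) (hα : 0 < α) (hβ : 0 < β) (p : ℕ) (hp : p = 1 ∨ p = 2)
    (h : torusSpec L₁ α β p = torusSpec L₂ α β p) :
    ∃ I : EuclideanSpace ℝ (Fin 2) ≃ₗᵢ[ℝ] EuclideanSpace ℝ (Fin 2),
      ⇑I '' (L₁ : Set (EuclideanSpace ℝ (Fin 2))) = (L₂ : Set (EuclideanSpace ℝ (Fin 2))) := by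
  have hcount : normSqCount (innerDual L₁) = normSqCount (innerDual L₂) :=
    normSqCount_innerDual_eq_of_torusSpec_eq (by lia) hα hβ h
  obtain ⟨I, hI⟩ := exists_linearIsometryEquiv_image_eq_of_normSqCount_eq
    finrank_euclideanSpace_fin finrank_euclideanSpace_fin hcount
  refine ⟨I, ?_⟩
  simpa only [innerDual_innerDual] using image_innerDual I hI
end

section
/- For every natural number n ≥ 4, all reals α, β > 0 and every natural number p with 1 ≤ p ≤ n, there exist full-rank lattices Λ₁ and Λ₂ in ℝⁿ such that Spec(Λ₁,α,β,p) = Spec(Λ₂,α,β,p) (as functions ℝ → ℕ) but no linear isometric equivalence I : ℝⁿ ≃ ℝⁿ satisfies I(Λ₁) = Λ₂ (i.e., the flat tori ℝⁿ/Λ₁ and ℝⁿ/Λ₂ are isospectral for F_{αβ,p} but not isometric). -/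
open Real
open scoped RealInnerProductSpace

/-!
Left multiplication by the quaternion `3ε + i + j + k`, with `ε = ±1`, has the integral matrix
`M ε` with `M ε * (M ε)ᵀ = 12`, so its rows span a lattice `K ε ⊆ ℤ⁴` that is self-dual for the
dot product modulo `12`. Modulo `3` every vector of `K ε` has a coordinate divisible by `3`, and
changing the sign of such a coordinate maps `K ε` to `K (-ε)`. Although this bijection is not
linear, it preserves the squares of all coordinates, hence also the norms after an arbitrary
rescaling of the coordinate axes; so the rescaled lattices have equinumerous spheres in their duals.

If the squares of the scale factors are linearly independent over `ℤ`, then the inner product of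
two lattice vectors determines the product of their `i`-th coordinates for every `i`, so an isometry
between the lattices can only change signs of coordinates. No choice of signs maps `K 1` to
`K (-1)`.
-/

section ScaledLattice

variable {ι : Type*}

/-- The diagonal map `z ↦ (sᵢ zᵢ)ᵢ` from integral vectors to Euclidean space. -/
def scaleHom (s : ι → ℝ) : (ι → ℤ) →ₗ[ℤ] EuclideanSpace ℝ ι where
  toFun z := WithLp.toLp 2 fun i => s i * z i
  map_add' z w := by ext i; simp [mul_add]
  map_smul' c z := by ext i; simp [mul_left_comm]

@[simp]
theorem scaleHom_apply (s : ι → ℝ) (z : ι → ℤ) (i : ι) : scaleHom s z i = s i * z i := rfl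

theorem inner_scaleHom_right [Fintype ι] (v : EuclideanSpace ℝ ι) (s : ι → ℝ) (z : ι → ℤ) :
    ⟪v, scaleHom s z⟫ = ∑ i, s i * v i * z i := by
  simp [PiLp.inner_apply, mul_right_comm]

theorem scaleHom_injective {s : ι → ℝ} (hs : ∀ i, s i ≠ 0) :
    Function.Injective (scaleHom s) := fun z w h => by
  ext i
  have hi : s i * z i = s i * w i := congrArg (fun v => v i) h
  exact_mod_cast mul_left_cancel₀ (hs i) hi

theorem norm_scaleHom_congr [Fintype ι] (s : ι → ℝ) {z w : ι → ℤ} (h : ∀ i, z i ^ 2 = w i ^ 2) :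
    ‖scaleHom s z‖ = ‖scaleHom s w‖ := by
  have h' (i : ι) : (z i : ℝ) ^ 2 = (w i : ℝ) ^ 2 := mod_cast h i
  simp only [EuclideanSpace.norm_eq, scaleHom_apply, Real.norm_eq_abs, sq_abs, mul_pow, h']

/-- The lattice in Euclidean space obtained from a module `K` of integral vectors by rescaling
the coordinate axes with the factors `sᵢ`. -/
def scaledLattice (s : ι → ℝ) (K : Submodule ℤ (ι → ℤ)) : Submodule ℤ (EuclideanSpace ℝ ι) :=
  K.map (scaleHom s)

theorem discreteTopology_scaledLattice [Finite ι] {s : ι → ℝ} (hs : ∀ i, s i ≠ 0)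
    (K : Submodule ℤ (ι → ℤ)) : DiscreteTopology (scaledLattice s K) := by
  cases nonempty_fintype ι
  let b := (EuclideanSpace.basisFun ι ℝ).toBasis.isUnitSMul fun i => (hs i).isUnit
  have hle : scaledLattice s K ≤ Submodule.span ℤ (Set.range b) := by
    rintro _ ⟨z, -, rfl⟩
    rw [b.mem_span_iff_repr_mem ℤ]
    intro i
    exact ⟨z i, by simp [b, Module.Basis.repr_isUnitSMul, Units.smul_def, hs i]⟩
  exact DiscreteTopology.of_subset
    (inferInstanceAs (DiscreteTopology (Submodule.span ℤ (Set.range b)))) hle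

theorem span_scaledLattice [Finite ι] {s : ι → ℝ} (hs : ∀ i, s i ≠ 0) {N : ℤ} (hN : N ≠ 0)
    {K : Submodule ℤ (ι → ℤ)} (hK : ∀ z, N • z ∈ K) :
    Submodule.span ℝ (scaledLattice s K : Set (EuclideanSpace ℝ ι)) = ⊤ := by
  classical
  cases nonempty_fintype ι
  rw [eq_top_iff, ← (EuclideanSpace.basisFun ι ℝ).toBasis.span_eq, Submodule.span_le]
  rintro _ ⟨i, rfl⟩
  have hmem : scaleHom s (N • Pi.single i 1) ∈ scaledLattice s K :=
    Submodule.mem_map_of_mem (hK _)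
  have hsmul : (EuclideanSpace.basisFun ι ℝ).toBasis i =
      (s i * N)⁻¹ • scaleHom s (N • Pi.single i 1) := by
    ext j
    have hsN : s i * N ≠ 0 := mul_ne_zero (hs i) (mod_cast hN)
    obtain rfl | hij := eq_or_ne j i
    · simpa [-mul_inv_rev] using (inv_mul_cancel₀ hsN).symm
    · simp [hij]
  rw [hsmul]
  exact Submodule.smul_mem _ _ (Submodule.subset_span hmem)

theorem isZLattice_scaledLattice [Fintype ι] {s : ι → ℝ} (hs : ∀ i, s i ≠ 0) {N : ℤ} (hN : N ≠ 0)
    {K : Submodule ℤ (ι → ℤ)} (hK : ∀ z, N • z ∈ K) :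
    @IsZLattice ℝ _ _ _ _ (scaledLattice s K) (discreteTopology_scaledLattice hs K) :=
  @IsZLattice.mk _ _ _ _ _ _ (_) (span_scaledLattice hs hN hK)

/-- The dual of a module of integral vectors with respect to the dot product modulo `N`. -/
def modDual [Fintype ι] (N : ℤ) (K : Submodule ℤ (ι → ℤ)) : Submodule ℤ (ι → ℤ) where
  carrier := {k | ∀ z ∈ K, N ∣ k ⬝ᵥ z}
  zero_mem' z _ := by simp
  add_mem' hk hl z hz := by simpa [add_dotProduct] using dvd_add (hk z hz) (hl z hz)
  smul_mem' c k hk z hz := by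
    rw [smul_dotProduct, smul_eq_mul]
    exact (hk z hz).mul_left c

end ScaledLattice

section Dual

variable {n : ℕ} {s : Fin n → ℝ} {N : ℤ} {K K₁ K₂ : Submodule ℤ (Fin n → ℤ)}

theorem scaleHom_mem_dualLattice_iff (hs : ∀ i, s i ≠ 0) (hN : N ≠ 0) (k : Fin n → ℤ) :
    scaleHom (fun i => (N * s i)⁻¹) k ∈ dualLattice (scaledLattice s K) ↔ k ∈ modDual N K := by
  have hN' : (N : ℝ) ≠ 0 := mod_cast hN
  have hinner (z : Fin n → ℤ) :
      N * ⟪scaleHom (fun i => (N * s i)⁻¹) k, scaleHom s z⟫ = ((k ⬝ᵥ z : ℤ) : ℝ) := by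
    rw [inner_scaleHom_right, Finset.mul_sum, dotProduct]
    push_cast
    refine Finset.sum_congr rfl fun i _ => ?_
    have := hs i
    simp only [scaleHom_apply]
    field_simp
  have hint (z : Fin n → ℤ) :
      (∃ m : ℤ, ⟪scaleHom (fun i => (N * s i)⁻¹) k, scaleHom s z⟫ = (m : ℝ)) ↔ N ∣ k ⬝ᵥ z :=
    exists_congr fun m => by
      rw [← mul_right_inj' hN', hinner]
      norm_cast
  exact Set.forall_mem_image.trans (forall₂_congr fun z _ => hint z)

theorem dualLattice_scaledLattice (hs : ∀ i, s i ≠ 0) (hN : N ≠ 0) (hK : ∀ z, N • z ∈ K) :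
    dualLattice (scaledLattice s K) = scaledLattice (fun i => (N * s i)⁻¹) (modDual N K) := by
  ext v
  constructor
  · intro hv
    have hcoord (i : Fin n) : ∃ k : ℤ, N * s i * v i = k := by
      obtain ⟨k, hk⟩ := hv _ (Submodule.mem_map_of_mem (hK (Pi.single i 1)))
      refine ⟨k, hk ▸ ?_⟩
      rw [inner_scaleHom_right, Fintype.sum_eq_single i fun j hj => by simp [hj]]
      simp only [Pi.smul_apply, Pi.single_eq_same, smul_eq_mul, mul_one]
      ring
    choose k hk using hcoord
    obtain rfl : scaleHom (fun i => (N * s i)⁻¹) k = v := by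
      ext i
      have hNs : N * s i ≠ 0 := mul_ne_zero (mod_cast hN) (hs i)
      rw [scaleHom_apply, ← hk, inv_mul_cancel_left₀ hNs]
    exact Submodule.mem_map_of_mem ((scaleHom_mem_dualLattice_iff hs hN k).1 hv)
  · rintro ⟨k, hk, rfl⟩
    exact (scaleHom_mem_dualLattice_iff hs hN k).2 hk

theorem exists_dualLattice_equiv_norm_eq (hs : ∀ i, s i ≠ 0) (hN : N ≠ 0)
    (hK₁ : ∀ z, N • z ∈ K₁) (hK₂ : ∀ z, N • z ∈ K₂) (σ : Equiv.Perm (Fin n → ℤ))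
    (hσ : ∀ k, k ∈ modDual N K₁ ↔ σ k ∈ modDual N K₂) (hsq : ∀ k i, σ k i ^ 2 = k i ^ 2) :
    ∃ e : dualLattice (scaledLattice s K₁) ≃ dualLattice (scaledLattice s K₂),
      ∀ l, ‖(e l : EuclideanSpace ℝ (Fin n))‖ = ‖(l : EuclideanSpace ℝ (Fin n))‖ := by
  have hinj : Function.Injective (scaleHom fun i => (N * s i)⁻¹) :=
    scaleHom_injective fun i => inv_ne_zero (mul_ne_zero (mod_cast hN) (hs i))
  rw [dualLattice_scaledLattice hs hN hK₁, dualLattice_scaledLattice hs hN hK₂]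
  let coords (K : Submodule ℤ (Fin n → ℤ)) :
      modDual N K ≃ (scaledLattice (fun i => (N * s i)⁻¹) (modDual N K) :
        Set (EuclideanSpace ℝ (Fin n))) :=
    (Submodule.equivMapOfInjective (scaleHom fun i => (N * s i)⁻¹) hinj (modDual N K)).toEquiv
  refine ⟨(coords K₁).symm.trans ((σ.subtypeEquiv hσ).trans (coords K₂)), fun l => ?_⟩
  obtain ⟨k, rfl⟩ := (coords K₁).surjective l
  rw [Equiv.trans_apply, Equiv.symm_apply_apply]
  exact norm_scaleHom_congr _ (hsq k)

theorem torusSpec_eq_of_dualLattice_equiv {L₁ L₂ : Submodule ℤ (EuclideanSpace ℝ (Fin n))}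
    (e : dualLattice L₁ ≃ dualLattice L₂)
    (he : ∀ l, ‖(e l : EuclideanSpace ℝ (Fin n))‖ = ‖(l : EuclideanSpace ℝ (Fin n))‖)
    (α β : ℝ) (p : ℕ) : torusSpec L₁ α β p = torusSpec L₂ α β p := by
  have hcard (γ x : ℝ) :
      Nat.card {l // l ∈ dualLattice L₁ ∧ 4 * π ^ 2 * γ * ‖l‖ ^ 2 = x} =
        Nat.card {l // l ∈ dualLattice L₂ ∧ 4 * π ^ 2 * γ * ‖l‖ ^ 2 = x} :=
    Nat.card_congr <| (Equiv.subtypeSubtypeEquivSubtypeInter _ _).symm.trans <|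
      (e.subtypeEquiv fun l => by rw [he]).trans (Equiv.subtypeSubtypeEquivSubtypeInter _ _)
  funext x
  simp only [torusSpec, hcard]

end Dual

section Isometry

variable {ι : Type*} [Fintype ι] {s : ι → ℝ}

theorem mul_eq_mul_of_inner_scaleHom_eq (hs : LinearIndependent ℤ fun i => s i ^ 2)
    {x y z w : ι → ℤ} (h : ⟪scaleHom s x, scaleHom s y⟫ = ⟪scaleHom s z, scaleHom s w⟫) (i : ι) :
    x i * y i = z i * w i := by
  have hsum : ∑ j, (x j * y j - z j * w j) • s j ^ 2 = 0 := by
    rw [← sub_eq_zero, inner_scaleHom_right, inner_scaleHom_right, ← Finset.sum_sub_distrib] at h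
    rw [← h]
    refine Finset.sum_congr rfl fun j _ => ?_
    simp only [scaleHom_apply, zsmul_eq_mul]
    push_cast
    ring
  exact sub_eq_zero.1 (Fintype.linearIndependent_iff.1 hs _ hsum i)

-- The signs are read off from the image of the vector `(N, …, N)`.
theorem exists_signs_of_linearIsometry (hs : LinearIndependent ℤ fun i => s i ^ 2) {N : ℤ}
    (hN : N ≠ 0) {K₁ K₂ : Submodule ℤ (ι → ℤ)} (hK₁ : ∀ z, N • z ∈ K₁)
    (I : EuclideanSpace ℝ ι →ₗᵢ[ℝ] EuclideanSpace ℝ ι)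
    (hI : Set.MapsTo I (scaledLattice s K₁) (scaledLattice s K₂)) :
    ∃ δ : ι → ℤˣ, ∀ z ∈ K₁, (fun i => δ i * z i) ∈ K₂ := by
  have hpre (z : ι → ℤ) (hz : z ∈ K₁) : ∃ a ∈ K₂, scaleHom s a = I (scaleHom s z) :=
    hI (Submodule.mem_map_of_mem hz)
  have hmul {x y a b : ι → ℤ} (ha : scaleHom s a = I (scaleHom s x))
      (hb : scaleHom s b = I (scaleHom s y)) (i : ι) : a i * b i = x i * y i :=
    mul_eq_mul_of_inner_scaleHom_eq hs (by rw [ha, hb, I.inner_map_map]) i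
  obtain ⟨d, -, hd⟩ := hpre _ (hK₁ 1)
  have hsign (i : ι) : ∃ δ : ℤˣ, d i = δ * N := by
    have hsq : d i * d i = N * N := by simpa using hmul hd hd i
    obtain h | h := mul_self_eq_mul_self_iff.1 hsq
    exacts [⟨1, by simp [h]⟩, ⟨-1, by simp [h]⟩]
  choose δ hδ using hsign
  refine ⟨δ, fun z hz => ?_⟩
  obtain ⟨a, ha, haz⟩ := hpre z hz
  convert ha using 2 with i
  have hda : N * (δ i * a i) = N * z i := by
    rw [mul_left_comm, ← mul_assoc, ← hδ]
    simpa using hmul hd haz i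
  rw [← mul_left_cancel₀ hN hda, ← mul_assoc, Int.units_coe_mul_self, one_mul]

end Isometry

section ProdInt

variable {d m : ℕ}

/-- The orthogonal sum `K ⊕ ℤᵐ`. -/
def prodInt (K : Submodule ℤ (Fin d → ℤ)) (m : ℕ) : Submodule ℤ (Fin (d + m) → ℤ) :=
  K.comap (LinearMap.funLeft ℤ ℤ (Fin.castAdd m))

theorem append_mem_prodInt_iff {K : Submodule ℤ (Fin d → ℤ)} {z : Fin d → ℤ} {w : Fin m → ℤ} :
    Fin.append z w ∈ prodInt K m ↔ z ∈ K := by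
  have h : LinearMap.funLeft ℤ ℤ (Fin.castAdd m) (Fin.append z w) = z :=
    funext (Fin.append_left z w)
  rw [prodInt, Submodule.mem_comap, h]

theorem smul_mem_prodInt {N : ℤ} {K : Submodule ℤ (Fin d → ℤ)} (hK : ∀ z, N • z ∈ K)
    (x : Fin (d + m) → ℤ) : N • x ∈ prodInt K m :=
  hK _

theorem append_dotProduct_append (k z : Fin d → ℤ) (l w : Fin m → ℤ) :
    Fin.append k l ⬝ᵥ Fin.append z w = k ⬝ᵥ z + l ⬝ᵥ w := by
  simp [dotProduct, Fin.sum_univ_add]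

theorem append_mem_modDual_prodInt_iff {N : ℤ} {K : Submodule ℤ (Fin d → ℤ)} {k : Fin d → ℤ}
    {l : Fin m → ℤ} :
    Fin.append k l ∈ modDual N (prodInt K m) ↔ k ∈ modDual N K ∧ ∀ i, N ∣ l i := by
  constructor
  · intro h
    refine ⟨fun z hz => ?_, fun i => ?_⟩
    · simpa [append_dotProduct_append] using h (Fin.append z 0) (append_mem_prodInt_iff.2 hz)
    · simpa [append_dotProduct_append] using
        h (Fin.append 0 (Pi.single i 1)) (append_mem_prodInt_iff.2 K.zero_mem)
  · rintro ⟨hk, hl⟩ x hx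
    rw [← Fin.append_castAdd_natAdd (f := x)] at hx ⊢
    rw [append_dotProduct_append]
    exact dvd_add (hk _ (append_mem_prodInt_iff.1 hx))
      (Finset.dvd_sum fun i _ => (hl i).mul_right _)

/-- The extension of a permutation of `ℤᵈ` to `ℤᵈ × ℤᵐ` by the identity of `ℤᵐ`. -/
def appendPerm (m : ℕ) (σ : Equiv.Perm (Fin d → ℤ)) : Equiv.Perm (Fin (d + m) → ℤ) :=
  (Fin.appendEquiv d m).permCongr (σ.prodCongr (Equiv.refl _))

theorem appendPerm_append (σ : Equiv.Perm (Fin d → ℤ)) (k : Fin d → ℤ) (l : Fin m → ℤ) :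
    appendPerm m σ (Fin.append k l) = Fin.append (σ k) l := by
  simp [appendPerm, Equiv.permCongr_apply, Fin.appendEquiv]
theorem sq_appendPerm {σ : Equiv.Perm (Fin d → ℤ)} (hσ : ∀ k i, σ k i ^ 2 = k i ^ 2)
    (x : Fin (d + m) → ℤ) (i : Fin (d + m)) : appendPerm m σ x i ^ 2 = x i ^ 2 := by
  rw [← Fin.append_castAdd_natAdd (f := x), appendPerm_append]
  induction i using Fin.addCases <;> simp [hσ]

theorem appendPerm_mem_modDual_prodInt_iff {N : ℤ} {K₁ K₂ : Submodule ℤ (Fin d → ℤ)}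
    {σ : Equiv.Perm (Fin d → ℤ)} (hσ : ∀ k, k ∈ modDual N K₁ ↔ σ k ∈ modDual N K₂)
    (x : Fin (d + m) → ℤ) :
    x ∈ modDual N (prodInt K₁ m) ↔ appendPerm m σ x ∈ modDual N (prodInt K₂ m) := by
  rw [← Fin.append_castAdd_natAdd (f := x), appendPerm_append, append_mem_modDual_prodInt_iff,
    append_mem_modDual_prodInt_iff, hσ]

theorem signs_mul_castAdd_mem {K₁ K₂ : Submodule ℤ (Fin d → ℤ)} {δ : Fin (d + m) → ℤˣ}
    (hδ : ∀ x ∈ prodInt K₁ m, (fun i => δ i * x i) ∈ prodInt K₂ m) {z : Fin d → ℤ}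
    (hz : z ∈ K₁) : (fun i => δ (Fin.castAdd m i) * z i) ∈ K₂ := by
  have h := hδ (Fin.append z 0) (append_mem_prodInt_iff.2 hz)
  simpa [prodInt, LinearMap.funLeft, Function.comp_def] using h

end ProdInt

section ConwaySloane

open scoped Matrix

/-- The matrix of left multiplication by the quaternion `3ε + i + j + k`, of norm `12`, in the
basis `1, i, j, k`. Its rows are the Conway–Sloane vectors, before rescaling of the axes. -/
def conwaySloaneMatrix (ε : ℤˣ) : Matrix (Fin 4) (Fin 4) ℤ :=
  !![3 * ε, -1, -1, -1; 1, 3 * ε, -1, 1; 1, 1, 3 * ε, -1; 1, -1, 1, 3 * ε]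

theorem conwaySloaneMatrix_mul_transpose (ε : ℤˣ) :
    conwaySloaneMatrix ε * (conwaySloaneMatrix ε)ᵀ = (12 : ℤ) • 1 := by
  obtain rfl | rfl := Int.units_eq_one_or ε <;> decide

theorem transpose_mul_conwaySloaneMatrix (ε : ℤˣ) :
    (conwaySloaneMatrix ε)ᵀ * conwaySloaneMatrix ε = (12 : ℤ) • 1 := by
  obtain rfl | rfl := Int.units_eq_one_or ε <;> decide

theorem odd_conwaySloaneMatrix (ε : ℤˣ) (i j : Fin 4) : Odd (conwaySloaneMatrix ε i j) := by
  rw [Int.odd_iff]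
  revert i j
  obtain rfl | rfl := Int.units_eq_one_or ε <;> decide

theorem conwaySloaneMatrix_neg (ε : ℤˣ) :
    conwaySloaneMatrix (-ε) = conwaySloaneMatrix ε - (6 * ε : ℤ) • 1 := by
  obtain rfl | rfl := Int.units_eq_one_or ε <;> decide

theorem conwaySloaneMatrix_mulVec (ε : ℤˣ) (z : Fin 4 → ℤ) :
    conwaySloaneMatrix ε *ᵥ z =
      ![3 * ε * z 0 - z 1 - z 2 - z 3, z 0 + 3 * ε * z 1 - z 2 + z 3,
        z 0 + z 1 + 3 * ε * z 2 - z 3, z 0 - z 1 + z 2 + 3 * ε * z 3] := by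
  ext i
  rw [Matrix.mulVec, dotProduct, Fin.sum_univ_four]
  fin_cases i <;>
    simp only [conwaySloaneMatrix, Matrix.of_apply, Fin.mk_one, Fin.zero_eta, Fin.reduceFinMk,
      Matrix.cons_val] <;>
    ring

/-- The module spanned by the integral Conway–Sloane vectors with sign `ε`. -/
def conwaySloaneModule (ε : ℤˣ) : Submodule ℤ (Fin 4 → ℤ) :=
  LinearMap.range (conwaySloaneMatrix ε)ᵀ.mulVecLin

theorem mem_conwaySloaneModule_iff_dvd {ε : ℤˣ} {z : Fin 4 → ℤ} :
    z ∈ conwaySloaneModule ε ↔ ∀ i, 12 ∣ (conwaySloaneMatrix ε *ᵥ z) i := by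
  constructor
  · rintro ⟨c, rfl⟩ i
    rw [Matrix.mulVecLin_apply, Matrix.mulVec_mulVec, conwaySloaneMatrix_mul_transpose,
      Matrix.smul_mulVec, Matrix.one_mulVec]
    exact dvd_mul_right _ _
  · intro h
    choose c hc using h
    have hc' : conwaySloaneMatrix ε *ᵥ z = (12 : ℤ) • c := funext hc
    refine ⟨c, smul_right_injective _ (by norm_num : (12 : ℤ) ≠ 0) ?_⟩
    simp only [Matrix.mulVecLin_apply]
    rw [← Matrix.mulVec_smul, ← hc', Matrix.mulVec_mulVec, transpose_mul_conwaySloaneMatrix,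
      Matrix.smul_mulVec, Matrix.one_mulVec]

theorem smul_mem_conwaySloaneModule (ε : ℤˣ) (z : Fin 4 → ℤ) :
    (12 : ℤ) • z ∈ conwaySloaneModule ε :=
  mem_conwaySloaneModule_iff_dvd.2 fun i => by
    rw [Matrix.mulVec_smul]
    exact dvd_mul_right _ _

theorem modDual_conwaySloaneModule (ε : ℤˣ) :
    modDual 12 (conwaySloaneModule ε) = conwaySloaneModule ε := by
  ext k
  have hdot (c : Fin 4 → ℤ) :
      k ⬝ᵥ ((conwaySloaneMatrix ε)ᵀ *ᵥ c) = (conwaySloaneMatrix ε *ᵥ k) ⬝ᵥ c := by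
    rw [Matrix.dotProduct_mulVec, Matrix.vecMul_transpose]
  rw [mem_conwaySloaneModule_iff_dvd]
  constructor
  · intro hk i
    have h := hk _ ⟨Pi.single i 1, rfl⟩
    rw [Matrix.mulVecLin_apply, hdot] at h
    simpa using h
  · rintro hk _ ⟨c, rfl⟩
    rw [Matrix.mulVecLin_apply, hdot]
    exact Finset.dvd_sum fun i _ => (hk i).mul_right _

theorem even_sub_of_mem_conwaySloaneModule {ε : ℤˣ} {z : Fin 4 → ℤ}
    (hz : z ∈ conwaySloaneModule ε) (i j : Fin 4) : Even (z i - z j) := by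
  obtain ⟨c, rfl⟩ := hz
  simp only [Matrix.mulVecLin_apply, Matrix.mulVec, dotProduct, Matrix.transpose_apply,
    ← Finset.sum_sub_distrib, ← sub_mul]
  exact Finset.even_sum _ fun l _ =>
    ((odd_conwaySloaneMatrix ε l i).sub_odd (odd_conwaySloaneMatrix ε l j)).mul_right _

theorem exists_three_dvd_of_mem_conwaySloaneModule {ε : ℤˣ} {z : Fin 4 → ℤ}
    (hz : z ∈ conwaySloaneModule ε) : ∃ j, 3 ∣ z j := by
  rw [mem_conwaySloaneModule_iff_dvd] at hz
  have h₀ : 3 ∣ z 1 + z 2 + z 3 := by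
    obtain ⟨c, hc⟩ : 12 ∣ 3 * ε * z 0 - z 1 - z 2 - z 3 := by
      simpa only [conwaySloaneMatrix_mulVec, Matrix.cons_val] using hz 0
    exact ⟨ε * z 0 - 4 * c, by linear_combination -hc⟩
  have h₁ : 3 ∣ z 0 - z 2 + z 3 := by
    obtain ⟨c, hc⟩ : 12 ∣ z 0 + 3 * ε * z 1 - z 2 + z 3 := by
      simpa only [conwaySloaneMatrix_mulVec, Matrix.cons_val] using hz 1
    exact ⟨4 * c - ε * z 1, by linear_combination hc⟩
  -- The two congruences cut out the tetracode, each of whose words has a zero coordinate.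
  have hcases : 3 ∣ z 2 - z 3 ∨ 3 ∣ z 2 + z 3 ∨ 3 ∣ z 2 ∨ 3 ∣ z 3 := by grind
  obtain h | h | h | h := hcases
  exacts [⟨0, by omega⟩, ⟨1, by omega⟩, ⟨2, h⟩, ⟨3, h⟩]

/-- The sign change of a coordinate divisible by three, if there is one. The coordinate is chosen
by `Classical.epsilon`, hence depends only on the set of coordinates divisible by three. -/
noncomputable def flipThree (z : Fin 4 → ℤ) : Fin 4 → ℤ :=
  Function.update z (Classical.epsilon fun j => 3 ∣ z j)
    (-z (Classical.epsilon fun j => 3 ∣ z j))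

theorem flipThree_sq (z : Fin 4 → ℤ) (i : Fin 4) : flipThree z i ^ 2 = z i ^ 2 := by
  unfold flipThree
  obtain rfl | hi := eq_or_ne i (Classical.epsilon fun j => 3 ∣ z j) <;> simp [*]

theorem flipThree_involutive : Function.Involutive flipThree := fun z => by
  have hdvd : (fun j => 3 ∣ flipThree z j) = fun j => 3 ∣ z j := by
    funext j
    unfold flipThree
    obtain rfl | hj := eq_or_ne j (Classical.epsilon fun j => 3 ∣ z j) <;> simp [*]
  rw [flipThree, hdvd]
  simp [flipThree]

-- Changing `ε` and changing the sign of `z j` both alter `conwaySloaneMatrix ε *ᵥ z` by multiples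
-- of `6`; the parities of the two multiples agree.
theorem update_neg_mem_conwaySloaneModule {ε : ℤˣ} {z : Fin 4 → ℤ}
    (hz : z ∈ conwaySloaneModule ε) {j : Fin 4} (hj : 3 ∣ z j) :
    Function.update z j (-z j) ∈ conwaySloaneModule (-ε) := by
  set z' := Function.update z j (-z j) with hz'
  obtain ⟨c, hc⟩ := hj
  have hupdate : z' = z - (6 * c) • Pi.single j 1 := by
    ext i
    obtain rfl | hi := eq_or_ne i j
    · simp only [hz', hc, Function.update_self, Pi.sub_apply, Pi.smul_apply, Pi.single_eq_same,
        smul_eq_mul]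
      ring
    · simp [hz', hi]
  have hmulVec (i : Fin 4) : (conwaySloaneMatrix (-ε) *ᵥ z') i =
      (conwaySloaneMatrix ε *ᵥ z) i - 6 * (c * conwaySloaneMatrix ε i j + ε * z' i) := by
    rw [conwaySloaneMatrix_neg, Matrix.sub_mulVec, Matrix.smul_mulVec, Matrix.one_mulVec]
    nth_rw 1 [hupdate]
    rw [Matrix.mulVec_sub, Matrix.mulVec_smul]
    simp only [Pi.sub_apply, Pi.smul_apply, smul_eq_mul, Matrix.mulVec_single_one,
      Matrix.col_apply]
    ring
  have heven (i : Fin 4) : Even (c * conwaySloaneMatrix ε i j + ε * z' i) := by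
    have hz_i : Even (z' i) ↔ Even (z i) := by
      obtain rfl | hi := eq_or_ne i j <;> simp [*]
    have hz_j : Even (z j) ↔ Even c := by
      rw [hc, Int.even_mul, or_iff_right (by decide)]
    have hε : ¬Even (ε : ℤ) := by obtain rfl | rfl := Int.units_eq_one_or ε <;> decide
    have hM := Int.not_even_iff_odd.2 (odd_conwaySloaneMatrix ε i j)
    have hij := Int.even_sub.1 (even_sub_of_mem_conwaySloaneModule hz i j)
    simp only [Int.even_add, Int.even_mul, hM, hε, or_false, false_or]
    tauto
  rw [mem_conwaySloaneModule_iff_dvd] at hz ⊢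
  intro i
  rw [hmulVec]
  exact dvd_sub (hz i) (mul_dvd_mul_left 6 (heven i).two_dvd)

theorem flipThree_mem_conwaySloaneModule {ε : ℤˣ} {z : Fin 4 → ℤ}
    (hz : z ∈ conwaySloaneModule ε) : flipThree z ∈ conwaySloaneModule (-ε) :=
  update_neg_mem_conwaySloaneModule hz
    (Classical.epsilon_spec (exists_three_dvd_of_mem_conwaySloaneModule hz))

theorem flipThree_mem_conwaySloaneModule_iff {ε : ℤˣ} {z : Fin 4 → ℤ} :
    flipThree z ∈ conwaySloaneModule (-ε) ↔ z ∈ conwaySloaneModule ε := by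
  refine ⟨fun h => ?_, flipThree_mem_conwaySloaneModule⟩
  simpa [flipThree_involutive z] using flipThree_mem_conwaySloaneModule h

theorem conwaySloaneMatrix_row_mem (ε : ℤˣ) (i : Fin 4) :
    conwaySloaneMatrix ε i ∈ conwaySloaneModule ε :=
  ⟨Pi.single i 1, by simp [Matrix.row_def]⟩

theorem not_exists_signs_conwaySloaneModule (ε : ℤˣ) :
    ¬ ∃ δ : Fin 4 → ℤˣ, ∀ z ∈ conwaySloaneModule ε,
      (fun i => δ i * z i) ∈ conwaySloaneModule (-ε) := by
  rintro ⟨δ, hδ⟩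
  have hdvd (i : Fin 4) :
      12 ∣ (conwaySloaneMatrix (-ε) *ᵥ fun j => δ j * conwaySloaneMatrix ε i j) i :=
    mem_conwaySloaneModule_iff_dvd.1 (hδ _ (conwaySloaneMatrix_row_mem ε i)) i
  simp only [conwaySloaneMatrix_mulVec] at hdvd
  have hε : (ε : ℤ) * ε = 1 := Int.units_coe_mul_self ε
  have h₀ : 12 ∣ -9 * (δ 0 : ℤ) + δ 1 + δ 2 + δ 3 := by
    convert hdvd 0 using 1
    simp only [conwaySloaneMatrix, Matrix.of_apply, Matrix.cons_val, Units.val_neg]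
    linear_combination 9 * (δ 0 : ℤ) * hε
  have h₁ : 12 ∣ (δ 0 : ℤ) - 9 * δ 1 + δ 2 + δ 3 := by
    convert hdvd 1 using 1
    simp only [conwaySloaneMatrix, Matrix.of_apply, Matrix.cons_val, Units.val_neg]
    linear_combination 9 * (δ 1 : ℤ) * hε
  have hsign (i : Fin 4) : (δ i : ℤ) = 1 ∨ (δ i : ℤ) = -1 := Int.isUnit_iff.1 (δ i).isUnit
  have := hsign 0
  have := hsign 1
  have := hsign 2
  have := hsign 3
  omega

end ConwaySloane

section Transcendental

theorem linearIndependent_pow_of_transcendental {R A : Type*} [CommRing R] [Ring A] [Algebra R A]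
    {x : A} (hx : Transcendental R x) : LinearIndependent R fun k : ℕ => x ^ k := by
  have h := (Polynomial.basisMonomials R).linearIndependent.map' (Polynomial.aeval x).toLinearMap
    (LinearMap.ker_eq_bot.2 (transcendental_iff_injective.1 hx))
  simpa [Function.comp_def] using h

theorem exists_linearIndependent_sq (n : ℕ) :
    ∃ s : Fin n → ℝ, LinearIndependent ℤ fun i => s i ^ 2 := by
  have hpow : LinearIndependent ℤ fun k : ℕ => liouvilleNumber (2 : ℕ) ^ k :=
    linearIndependent_pow_of_transcendental (transcendental_liouvilleNumber le_rfl)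
  have hinj : Function.Injective fun i : Fin n => (i : ℕ) * 2 :=
    (mul_left_injective₀ two_ne_zero).comp Fin.val_injective
  refine ⟨fun i => liouvilleNumber (2 : ℕ) ^ (i : ℕ), ?_⟩
  simpa only [← pow_mul, Function.comp_def] using hpow.comp _ hinj

end Transcendental

theorem stmt_13_general (n : ℕ) (hn : 4 ≤ n) :
    ∃ (L₁ L₂ : Submodule ℤ (EuclideanSpace ℝ (Fin n)))
      (h₁ : DiscreteTopology L₁) (h₂ : DiscreteTopology L₂),
      @IsZLattice ℝ _ _ _ _ L₁ h₁ ∧ @IsZLattice ℝ _ _ _ _ L₂ h₂ ∧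
      (∃ e : dualLattice L₁ ≃ dualLattice L₂,
        ∀ l, ‖(e l : EuclideanSpace ℝ (Fin n))‖ = ‖(l : EuclideanSpace ℝ (Fin n))‖) ∧
      ¬ ∃ I : EuclideanSpace ℝ (Fin n) ≃ₗᵢ[ℝ] EuclideanSpace ℝ (Fin n),
          ⇑I '' (L₁ : Set (EuclideanSpace ℝ (Fin n))) =
            (L₂ : Set (EuclideanSpace ℝ (Fin n))) := by
  obtain ⟨m, rfl⟩ := Nat.exists_eq_add_of_le hn
  obtain ⟨s, hs⟩ := exists_linearIndependent_sq (4 + m)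
  have hs₀ (i) : s i ≠ 0 := ne_zero_pow two_ne_zero (hs.ne_zero i)
  have hK (ε : ℤˣ) := smul_mem_prodInt (m := m) (smul_mem_conwaySloaneModule ε)
  refine ⟨scaledLattice s (prodInt (conwaySloaneModule 1) m),
    scaledLattice s (prodInt (conwaySloaneModule (-1)) m),
    discreteTopology_scaledLattice hs₀ _, discreteTopology_scaledLattice hs₀ _,
    isZLattice_scaledLattice hs₀ (by norm_num) (hK 1),
    isZLattice_scaledLattice hs₀ (by norm_num) (hK (-1)), ?_, ?_⟩
  · exact exists_dualLattice_equiv_norm_eq hs₀ (by norm_num) (hK 1) (hK (-1))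
      (appendPerm m flipThree_involutive.toPerm)
      (appendPerm_mem_modDual_prodInt_iff fun k => by
        rw [modDual_conwaySloaneModule, modDual_conwaySloaneModule]
        exact flipThree_mem_conwaySloaneModule_iff.symm)
      (sq_appendPerm flipThree_sq)
  · rintro ⟨I, hI⟩
    obtain ⟨δ, hδ⟩ := exists_signs_of_linearIsometry hs (by norm_num) (hK 1) I.toLinearIsometry
      (Set.mapsTo_iff_image_subset.2 hI.subset)
    exact not_exists_signs_conwaySloaneModule 1 ⟨_, fun z => signs_mul_castAdd_mem hδ⟩

/-- From dimension 4 onward there are non-isometric flat tori that are isospectral for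
`F_{αβ,p}`. -/
theorem stmt_13 (n : ℕ) (hn : 4 ≤ n) (α β : ℝ) (hα : 0 < α) (hβ : 0 < β)
    (p : ℕ) (hp : 1 ≤ p) (hpn : p ≤ n) :
    ∃ (L₁ L₂ : Submodule ℤ (EuclideanSpace ℝ (Fin n)))
      (h₁ : DiscreteTopology L₁) (h₂ : DiscreteTopology L₂),
      @IsZLattice ℝ _ _ _ _ L₁ h₁ ∧ @IsZLattice ℝ _ _ _ _ L₂ h₂ ∧
      torusSpec L₁ α β p = torusSpec L₂ α β p ∧
      ¬ ∃ I : EuclideanSpace ℝ (Fin n) ≃ₗᵢ[ℝ] EuclideanSpace ℝ (Fin n),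
          ⇑I '' (L₁ : Set (EuclideanSpace ℝ (Fin n))) =
            (L₂ : Set (EuclideanSpace ℝ (Fin n))) := by
  obtain ⟨L₁, L₂, h₁, h₂, hL₁, hL₂, ⟨e, he⟩, hI⟩ := stmt_13_general n hn
  exact ⟨L₁, L₂, h₁, h₂, hL₁, hL₂, torusSpec_eq_of_dualLattice_equiv e he α β p, hI⟩
end

section
/- Let n ≥ 2 and let p be a natural number with 1 ≤ p ≤ n−1, and let α, β, r, r' > 0 be reals. Then S(n,p,α,β,r) = S(n,p,α,β,r') (as functions ℝ → ℕ) if and only if r = r'. -/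
open scoped Classical

/-- The spectrum, with multiplicities, of the generalized Hodge-Laplace operator
`F_{αβ} = α dδ + β δd` on `p`-forms on the round `n`-sphere of radius `r`
(Theorem 4.12 and Proposition 4.15): the eigenvalue `λ(k) = (β/r²)(k+p)(k+n-p-1)` for
`k ≥ 1` occurs with multiplicity `dim V_k^p` and the eigenvalue
`μ(k) = (α/r²)(k+p)(k+n-p+1)` for `k ≥ 0` with multiplicity `dim W_k^p`. -/
noncomputable def sphereSpec (n p : ℕ) (α β r : ℝ) : ℝ → ℕ := fun x =>
  (∑' k : ℕ,
      if 1 ≤ k ∧ (β / r ^ 2) * (((k + p) * (k + n - p - 1) : ℕ) : ℝ) = x then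
        ((n + k - 1).factorial * (n + 2 * k - 1)) /
          (p.factorial * (k - 1).factorial * (n - p - 1).factorial * (n + k - p - 1) * (k + p))
      else 0) +
  (∑' k : ℕ,
      if (α / r ^ 2) * (((k + p) * (k + n - p + 1) : ℕ) : ℝ) = x then
        ((n + k).factorial * (n + 2 * k + 1)) /
          ((p - 1).factorial * k.factorial * (n - p).factorial * (n + k - p + 1) * (k + p))
      else 0)

/-!
On the unit sphere `S^(a+b+1)` the operator `δd` acts on coexact `a`-forms with eigenvalues
`(j+a+1)(j+b+1)`, and `d` carries coexact `(p-1)`-forms isomorphically onto exact `p`-forms. So the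
spectrum of `F_{αβ}` on `p`-forms is that of `β δd` on coexact `p`-forms plus that of `α δd` on
coexact `(p-1)`-forms, both scaled by `1/r²`. The smallest absolute value of an eigenvalue is thus
`K/r²` with `K > 0` independent of `r`, and it determines `r`.
-/

open Function Set
open scoped Nat

theorem tsum_ite_ne_zero_iff {ι M : Type*} [AddCommMonoid M] [TopologicalSpace M] {P : ι → Prop}
    [DecidablePred P] {d : ι → M} (hP : {i | P i}.Subsingleton) (hd : ∀ i, P i → d i ≠ 0) :
    (∑' i, if P i then d i else 0) ≠ 0 ↔ ∃ i, P i := by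
  constructor
  · contrapose!
    intro hnone
    simp only [hnone, if_false, tsum_zero]
  · rintro ⟨i, hi⟩
    have hoff : ∀ j ≠ i, (if P j then d j else 0) = 0 :=
      fun j hji ↦ if_neg fun hj ↦ hji (hP hj hi)
    rw [tsum_eq_single i hoff, if_pos hi]
    exact hd i hi

/-- The `j`-th eigenvalue, `j ≥ 0`, of `δd` on coexact `a`-forms on the unit `(a+b+1)`-sphere. -/
def coexactEigenvalue (a b j : ℕ) : ℕ := (j + a + 1) * (j + b + 1)

/-- The multiplicity of `coexactEigenvalue a b j`: the dimension of the paper's `V_{j+1}^a`, and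
also of `W_j^{a+1}`, on the `(a+b+1)`-sphere. -/
def coexactMultiplicity (a b j : ℕ) : ℕ :=
  (a + b + j + 1)! * (a + b + 2 * j + 2) / (a ! * j ! * b ! * (b + j + 1) * (j + a + 1))

/-- The spectrum, with multiplicities, of `c δd` on coexact `a`-forms on the unit
`(a+b+1)`-sphere. -/
noncomputable def coexactSpec (a b : ℕ) (c : ℝ) : ℝ → ℕ := fun x ↦
  ∑' j, if c * coexactEigenvalue a b j = x then coexactMultiplicity a b j else 0

theorem dimV_eq_coexactMultiplicity {n p : ℕ} (hpn : p < n) (j : ℕ) :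
    (n + (j + 1) - 1)! * (n + 2 * (j + 1) - 1) /
        (p ! * (j + 1 - 1)! * (n - p - 1)! * (n + (j + 1) - p - 1) * (j + 1 + p)) =
      coexactMultiplicity p (n - p - 1) j := by
  grind [coexactMultiplicity]

theorem dimW_eq_coexactMultiplicity {n p : ℕ} (hp : 1 ≤ p) (hpn : p ≤ n) (j : ℕ) :
    (n + j)! * (n + 2 * j + 1) /
        ((p - 1)! * j ! * (n - p)! * (n + j - p + 1) * (j + p)) =
      coexactMultiplicity (p - 1) (n - p) j := by
  grind [coexactMultiplicity]

theorem sphereSpec_eq_coexactSpec_add_coexactSpec {n p : ℕ} (hp : 1 ≤ p) (hpn : p < n)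
    (α β r : ℝ) :
    sphereSpec n p α β r =
      coexactSpec p (n - p - 1) (β / r ^ 2) + coexactSpec (p - 1) (n - p) (α / r ^ 2) := by
  have hV (j : ℕ) : (j + 1 + p) * (j + 1 + n - p - 1) = coexactEigenvalue p (n - p - 1) j :=
    congrArg₂ (· * ·) (by omega) (by omega)
  have hW (j : ℕ) : (j + p) * (j + n - p + 1) = coexactEigenvalue (p - 1) (n - p) j :=
    congrArg₂ (· * ·) (by omega) (by omega)
  ext x
  refine congrArg₂ (· + ·) ?_ (tsum_congr fun j ↦ ?_)
  · rw [← (add_left_injective 1).tsum_eq]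
    · refine tsum_congr fun j ↦ ?_
      simp only [hV, dimV_eq_coexactMultiplicity hpn, Nat.le_add_left, true_and]
    · rintro (_ | k) hk
      · simp at hk
      · exact mem_range_self k
  · simp only [hW, dimW_eq_coexactMultiplicity hp hpn.le]

theorem coexactEigenvalue_pos (a b j : ℕ) : 0 < coexactEigenvalue a b j := by
  unfold coexactEigenvalue
  positivity

theorem coexactEigenvalue_strictMono (a b : ℕ) : StrictMono (coexactEigenvalue a b) :=
  fun i j hij ↦ Nat.mul_lt_mul'' (by omega) (by omega)

theorem coexactMultiplicity_pos (a b j : ℕ) : 0 < coexactMultiplicity a b j := by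
  have hmultinomial : a ! * j ! * b ! ≤ (a + j + b)! :=
    Nat.le_of_dvd (Nat.factorial_pos _) <|
      (Nat.mul_dvd_mul_right (Nat.factorial_mul_factorial_dvd_factorial_add a j) _).trans
        (Nat.factorial_mul_factorial_dvd_factorial_add (a + j) b)
  refine Nat.div_pos ?_ (by positivity)
  calc a ! * j ! * b ! * (b + j + 1) * (j + a + 1)
      ≤ (a + j + b)! * (a + j + b + 1) * (a + b + 2 * j + 2) :=
        Nat.mul_le_mul (Nat.mul_le_mul hmultinomial (by omega)) (by omega)
    _ = (a + b + j + 1)! * (a + b + 2 * j + 2) := by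
      rw [add_right_comm a j b, Nat.factorial_succ, mul_comm (a + b + j + 1)]

theorem support_coexactSpec (a b : ℕ) {c : ℝ} (hc : c ≠ 0) :
    support (coexactSpec a b c) = range fun j ↦ c * (coexactEigenvalue a b j : ℝ) := by
  have hinj : Injective fun j ↦ c * (coexactEigenvalue a b j : ℝ) :=
    (mul_right_injective₀ hc).comp
      (Nat.cast_injective.comp (coexactEigenvalue_strictMono a b).injective)
  ext x
  exact tsum_ite_ne_zero_iff (fun i hi j hj ↦ hinj (hi.trans hj.symm))
    fun j _ ↦ (coexactMultiplicity_pos a b j).ne'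

theorem isLeast_abs_support_coexactSpec (a b : ℕ) {c : ℝ} (hc : c ≠ 0) :
    IsLeast (abs '' support (coexactSpec a b c)) (|c| * coexactEigenvalue a b 0) := by
  have hmono : Monotone fun j ↦ |c| * (coexactEigenvalue a b j : ℝ) :=
    (Nat.mono_cast.comp (coexactEigenvalue_strictMono a b).monotone).const_mul (abs_nonneg c)
  rw [support_coexactSpec a b hc, ← range_comp]
  simp only [comp_def, abs_mul, Nat.abs_cast]
  exact ⟨mem_range_self 0, forall_mem_range.mpr fun j ↦ hmono j.zero_le⟩

/-- The smallest absolute value of an eigenvalue of `F_{αβ}` on `p`-forms on the unit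
`n`-sphere. -/
noncomputable def leastAbsEigenvalue (n p : ℕ) (α β : ℝ) : ℝ :=
  min (|β| * coexactEigenvalue p (n - p - 1) 0) (|α| * coexactEigenvalue (p - 1) (n - p) 0)

theorem leastAbsEigenvalue_pos (n p : ℕ) {α β : ℝ} (hα : α ≠ 0) (hβ : β ≠ 0) :
    0 < leastAbsEigenvalue n p α β :=
  lt_min (mul_pos (abs_pos.mpr hβ) (Nat.cast_pos.mpr (coexactEigenvalue_pos ..)))
    (mul_pos (abs_pos.mpr hα) (Nat.cast_pos.mpr (coexactEigenvalue_pos ..)))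

theorem isLeast_abs_support_sphereSpec {n p : ℕ} (hp : 1 ≤ p) (hpn : p < n) {α β r : ℝ}
    (hα : α ≠ 0) (hβ : β ≠ 0) (hr : r ≠ 0) :
    IsLeast (abs '' support (sphereSpec n p α β r)) (leastAbsEigenvalue n p α β / r ^ 2) := by
  have hr2 : 0 < r ^ 2 := by positivity
  have hsupport : support (sphereSpec n p α β r) =
      support (coexactSpec p (n - p - 1) (β / r ^ 2)) ∪
        support (coexactSpec (p - 1) (n - p) (α / r ^ 2)) := by
    ext x
    simp [sphereSpec_eq_coexactSpec_add_coexactSpec hp hpn, imp_iff_not_or]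
  rw [hsupport, image_union]
  have hleast := (isLeast_abs_support_coexactSpec p (n - p - 1) (div_ne_zero hβ hr2.ne')).union
    (isLeast_abs_support_coexactSpec (p - 1) (n - p) (div_ne_zero hα hr2.ne'))
  simpa only [leastAbsEigenvalue, abs_div, abs_of_pos hr2, div_mul_eq_mul_div,
    min_div_div_right hr2.le] using hleast

theorem stmt_14_general {n p : ℕ} (hp : 1 ≤ p) (hpn : p < n) {α β r r' : ℝ}
    (hα : α ≠ 0) (hβ : β ≠ 0) (hr : 0 < r) (hr' : 0 < r') :
    sphereSpec n p α β r = sphereSpec n p α β r' ↔ r = r' := by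
  refine ⟨fun h ↦ ?_, congrArg _⟩
  have hleast := isLeast_abs_support_sphereSpec hp hpn hα hβ hr.ne'
  have hleast' := isLeast_abs_support_sphereSpec hp hpn hα hβ hr'.ne'
  have hdiv : leastAbsEigenvalue n p α β / r ^ 2 = leastAbsEigenvalue n p α β / r' ^ 2 :=
    (h ▸ hleast).unique hleast'
  have hsq : r ^ 2 = r' ^ 2 := by
    simpa only [div_eq_mul_inv, mul_right_inj' (leastAbsEigenvalue_pos n p hα hβ).ne',
      inv_inj] using hdiv
  exact (pow_left_inj₀ hr.le hr'.le two_ne_zero).mp hsq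

/-- Proposition 4.19: `F_{αβ,p}` on spheres of radii `r` and `r'` is isospectral iff
`r = r'`. -/
theorem stmt_14 (n p : ℕ) (hn : 2 ≤ n) (hp : 1 ≤ p) (hpn : p ≤ n - 1)
    (α β r r' : ℝ) (hα : 0 < α) (hβ : 0 < β) (hr : 0 < r) (hr' : 0 < r') :
    sphereSpec n p α β r = sphereSpec n p α β r' ↔ r = r' :=
  stmt_14_general hp (by omega) hα.ne' hβ.ne' hr hr'
end
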